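/- arXiv:2410.02460 — 7 statements merged into one kernel-verified Lean document; each statement's English description precedes it below -/
import Mathlib

section
/- For every m ∈ {1, 2, 3, 4, 5} and every positive integer n, μ(n, m) = U(n, m). -/
/-!
The column space of a matrix in `A(n,m)` is a binary code in which every coordinate lies in a word
of weight at most `m`, and `M(W,0)` is the maximal weight of its words. So the lower bound says
that a code on `N` points, covered by words of weight at most `m`, has a word of weight at least
`L N`, where `L` is `U(·,m)`: `N` for `m = 1`, `low3` for `m ≤ 3` and `low5` for `m ≤ 5`.

In a minimal counterexample (`MinCex`) there are two reductions. If `T` is a union of words, one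
may delete `T`, take a heavy word of the punctured code and correct it by words inside `T`; on
average this makes half of `T` light up, so `T` contributes `⌈|T|/2⌉` (`MinCex.half`), and if two
words inside `T` have odd intersection it contributes more than `|T|/2` (`MinCex.half_odd`). If
the rest of the ground set is covered by light words avoiding `T`, then `T` contributes the full
weight of any word inside it (`MinCex.isolated`).

For `m = 5` the first reduction excludes unions of words of size `1, 3, 7`, and those of size
`6, 8, 10, 14` in the presence of an odd intersection. Hence light words have weight `2`, `4` or
`5`; those of weight `5` are disjoint from the others and pairwise meet in one point; the second
reduction then eliminates the weights `2` and `4`. Four words of weight `5` in general position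
would span `14` points, so three of any four are concurrent, and therefore all but at most one of
them pass through a common point; the sum of the words through this point contradicts
minimality. The case `m = 3` is a short version of the same argument.

The upper bound comes from block-diagonal matrices with blocks of sizes `1`, `3` and `7` whose
column spaces have maximal weights `1`, `2` and `4`.
-/

open Matrix

/-- `Mfun W c` is `M(W,c)`: the maximum of `|W·x + c|` over all `x ∈ 𝔽₂ⁿ`. -/
def Mfun {n : ℕ} (W : Matrix (Fin n) (Fin n) (ZMod 2)) (c : Fin n → ZMod 2) : ℕ :=
  Finset.univ.sup fun x : Fin n → ZMod 2 => hammingNorm (W.mulVec x + c)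

/-- `Aset n m`: matrices with all diagonal entries 1 and every column of Hamming weight ≤ m. -/
def Aset (n m : ℕ) : Set (Matrix (Fin n) (Fin n) (ZMod 2)) :=
  {W | (∀ i, W i i = 1) ∧ ∀ j, hammingNorm (fun i => W i j) ≤ m}

/-- `AstarSet n m`: matrices with all diagonal entries 1 and every column of Hamming weight
exactly m. -/
def AstarSet (n m : ℕ) : Set (Matrix (Fin n) (Fin n) (ZMod 2)) :=
  {W | (∀ i, W i i = 1) ∧ ∀ j, hammingNorm (fun i => W i j) = m}

/-- `μ(n,m) = min { M(W,0) : W ∈ A(n,m) }`. -/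
noncomputable def mu (n m : ℕ) : ℕ := sInf ((fun W => Mfun W 0) '' Aset n m)

/-- `μ*(n,m) = min { M(W,0) : W ∈ A*(n,m) }`. -/
noncomputable def muStar (n m : ℕ) : ℕ := sInf ((fun W => Mfun W 0) '' AstarSet n m)

/-- `ν(n,m) = min { M(W,c) : W ∈ A(n,m), c ∈ 𝔽₂ⁿ }`. -/
noncomputable def nu (n m : ℕ) : ℕ := sInf {t | ∃ W ∈ Aset n m, ∃ c, Mfun W c = t}

/-- `ν*(n,m) = min { M(W,c) : W ∈ A*(n,m), c ∈ 𝔽₂ⁿ }`. -/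
noncomputable def nuStar (n m : ℕ) : ℕ := sInf {t | ∃ W ∈ AstarSet n m, ∃ c, Mfun W c = t}

/-- The sequence `a` from the paper: `a(1)=1`, `a(2^k−1+i)=2^{k−1}+a(i)` for `1 ≤ i ≤ 2^k−1`,
and `a(2^{k+1}−1)=2^k`.  (For `2^k ≤ n ≤ 2^{k+1}-1` we have `Nat.log2 n = k`.) -/
def aseq : ℕ → ℕ
  | 0 => 0
  | 1 => 1
  | (n+2) =>
    let k := Nat.log2 (n+2)
    if n + 2 = 2^(k+1) - 1 then 2^k
    else 2^(k-1) + aseq ((n+2) - (2^k - 1))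
decreasing_by
  have hk : 1 ≤ Nat.log2 (n+2) := by
    rw [Nat.le_log2 (by omega)]
    omega
  have h2 : 2 ≤ 2 ^ Nat.log2 (n+2) := by
    calc (2:ℕ) = 2^1 := rfl
    _ ≤ _ := Nat.pow_le_pow_right (by norm_num) hk
  omega

/-- The upper bound `U(n,m)`: with `k` such that `2^k ≤ m < 2^{k+1}` and
`n = (2^{k+1}−1)q + r`, `q ≥ 0`, `1 ≤ r ≤ 2^{k+1}−1`, set `U(n,m) = q·2^k + a(r)`. -/
def Ufun (n m : ℕ) : ℕ :=
  let k := Nat.log2 m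
  let p := 2^(k+1) - 1
  ((n-1)/p) * 2^k + aseq ((n-1) % p + 1)

open scoped symmDiff

/-! ### Covered codes and minimal counterexamples -/

section Codes

variable {α : Type*}

/-- `T` is the union of the words of `C` which it contains. -/
def Full (C : Set (Finset α)) (T : Finset α) : Prop :=
  ∀ a ∈ T, ∃ x ∈ C, a ∈ x ∧ x ⊆ T

theorem Full.self {C : Set (Finset α)} {u : Finset α} (hu : u ∈ C) : Full C u :=
  fun _ ha => ⟨u, hu, ha, subset_rfl⟩

variable [DecidableEq α]

/-- A binary linear code on the ground set `A`, its words being identified with their supports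
(so that addition is symmetric difference), such that every point of `A` lies in a word of
weight at most `m`. -/
structure IsCode (m : ℕ) (C : Set (Finset α)) (A : Finset α) : Prop where
  empty : ∅ ∈ C
  symm : ∀ u ∈ C, ∀ v ∈ C, u ∆ v ∈ C
  sub : ∀ u ∈ C, u ⊆ A
  cover : ∀ a ∈ A, ∃ u ∈ C, a ∈ u ∧ u.card ≤ m

/-- A minimal counterexample to the claim that a code on `N` points which is covered by words of
weight at most `m` has a word of weight at least `L N`. -/
structure MinCex (m : ℕ) (L : ℕ → ℕ) (C : Set (Finset α)) (A : Finset α) : Prop where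
  code : IsCode m C A
  small : ∀ c ∈ C, c.card < L A.card
  ih : ∀ (A' : Finset α) (C' : Set (Finset α)), A'.card < A.card → IsCode m C' A' →
    ∃ c ∈ C', L A'.card ≤ c.card

theorem exists_word_of_no_minCex {m : ℕ} {L : ℕ → ℕ}
    (h : ∀ (C : Set (Finset α)) (A : Finset α), ¬ MinCex m L C A) :
    ∀ (A : Finset α) (C : Set (Finset α)), IsCode m C A → ∃ c ∈ C, L A.card ≤ c.card := by
  have key : ∀ (N : ℕ) (A : Finset α) (C : Set (Finset α)), A.card = N → IsCode m C A →
      ∃ c ∈ C, L A.card ≤ c.card := by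
    intro N
    induction N using Nat.strong_induction_on with
    | _ N IH =>
      intro A C hA hC
      by_contra! hcon
      exact h C A ⟨hC, hcon, fun A' C' hlt hC' => IH _ (hA ▸ hlt) A' C' rfl hC'⟩
  exact fun A C hC => key _ A C rfl hC

theorem Full.union {C : Set (Finset α)} {S T : Finset α} (hS : Full C S) (hT : Full C T) :
    Full C (S ∪ T) := by
  intro a ha
  rcases Finset.mem_union.1 ha with h | h
  · obtain ⟨x, hx, hax, hxs⟩ := hS a h
    exact ⟨x, hx, hax, hxs.trans Finset.subset_union_left⟩
  · obtain ⟨x, hx, hax, hxs⟩ := hT a h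
    exact ⟨x, hx, hax, hxs.trans Finset.subset_union_right⟩

theorem card_symmDiff_add (u v : Finset α) :
    (u ∆ v).card + 2 * (u ∩ v).card = u.card + v.card := by
  have h1 : (u ∆ v).card = (u \ v).card + (v \ u).card := by
    rw [symmDiff_def, Finset.sup_eq_union]
    exact Finset.card_union_of_disjoint disjoint_sdiff_sdiff
  have h2 := Finset.card_sdiff_add_card_inter u v
  have h3 := Finset.card_sdiff_add_card_inter v u
  rw [Finset.inter_comm v u] at h3
  omega

/-- Words of `C` inside `T`: on average over these words, the translates of `c` contain half of
the points of the full set `T`, because adding a word through `a` toggles `a`. -/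
theorem two_mul_sum_card {C : Set (Finset α)} {A T : Finset α} {m : ℕ} (hC : IsCode m C A)
    (hT : Full C T) {V : Finset (Finset α)} (hV : ∀ x, x ∈ V ↔ x ∈ C ∧ x ⊆ T)
    {c : Finset α} (hc : c ⊆ T) :
    2 * ∑ x ∈ V, (c ∆ x).card = V.card * T.card := by
  have hsub : ∀ x ∈ V, c ∆ x ⊆ T := by
    intro x hx a ha
    rcases Finset.mem_symmDiff.1 ha with h | h
    · exact hc h.1
    · exact ((hV x).1 hx).2 h.1
  have h1 : ∑ x ∈ V, (c ∆ x).card = ∑ a ∈ T, (V.filter fun x => a ∈ c ∆ x).card := by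
    refine Eq.trans (Finset.sum_congr rfl fun x hx => ?_)
      (Finset.sum_card_bipartiteAbove_eq_sum_card_bipartiteBelow (fun x a => a ∈ c ∆ x))
    congr 1
    ext a
    simp only [Finset.bipartiteAbove, Finset.mem_filter]
    exact ⟨fun h => ⟨hsub x hx h, h⟩, fun h => h.2⟩
  have h2 : ∀ a ∈ T, 2 * (V.filter fun x => a ∈ c ∆ x).card = V.card := by
    intro a ha
    obtain ⟨y, hy, hay, hyT⟩ := hT a ha
    have h3 : (V.filter fun x => a ∈ c ∆ x).card = (V.filter fun x => ¬ a ∈ c ∆ x).card := by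
      have hmem : ∀ x ∈ V, x ∆ y ∈ V := by
        intro x hx
        refine (hV _).2 ⟨hC.symm x ((hV x).1 hx).1 y hy, ?_⟩
        intro b hb
        rcases Finset.mem_symmDiff.1 hb with h | h
        · exact ((hV x).1 hx).2 h.1
        · exact hyT h.1
      refine Finset.card_bij' (fun x _ => x ∆ y) (fun x _ => x ∆ y) ?_ ?_ ?_ ?_
      · intro x hx
        simp only [Finset.mem_filter] at hx ⊢
        refine ⟨hmem x hx.1, ?_⟩
        have := hx.2
        simp only [Finset.mem_symmDiff] at this ⊢
        tauto
      · intro x hx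
        simp only [Finset.mem_filter] at hx ⊢
        refine ⟨hmem x hx.1, ?_⟩
        have := hx.2
        simp only [Finset.mem_symmDiff] at this ⊢
        tauto
      · intro x _
        exact symmDiff_symmDiff_cancel_right y x
      · intro x _
        exact symmDiff_symmDiff_cancel_right y x
    have h4 := Finset.card_filter_add_card_filter_not (s := V) (fun x => a ∈ c ∆ x)
    omega
  rw [h1, Finset.mul_sum, Finset.sum_congr rfl h2, Finset.sum_const, smul_eq_mul, mul_comm]

theorem exists_half_le {C : Set (Finset α)} {A T : Finset α} {m : ℕ} (hC : IsCode m C A)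
    (hT : Full C T) {c : Finset α} (hc : c ⊆ T) :
    ∃ x ∈ C, x ⊆ T ∧ T.card ≤ 2 * (c ∆ x).card := by
  classical
  obtain ⟨V, hV⟩ : ∃ V : Finset (Finset α), ∀ x, x ∈ V ↔ x ∈ C ∧ x ⊆ T :=
    ⟨T.powerset.filter (· ∈ C), fun x => by simp [and_comm]⟩
  have hsum := two_mul_sum_card hC hT hV hc
  by_contra! hcon
  have hne : V.Nonempty := ⟨∅, (hV _).2 ⟨hC.empty, Finset.empty_subset _⟩⟩
  have h : ∑ x ∈ V, 2 * (c ∆ x).card < ∑ _x ∈ V, T.card :=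
    Finset.sum_lt_sum_of_nonempty hne fun x hx => hcon x ((hV x).1 hx).1 ((hV x).1 hx).2
  rw [← Finset.mul_sum, hsum, Finset.sum_const, smul_eq_mul] at h
  exact lt_irrefl _ h

/-- If no translate of `c` beats the average, all of them have weight `|T| / 2`. Then `c` halves
every word inside `T`, hence also every intersection of two such words, which is therefore
even. -/
theorem exists_half_lt {C : Set (Finset α)} {A T : Finset α} {m : ℕ} (hC : IsCode m C A)
    (hT : Full C T) {u v : Finset α} (hu : u ∈ C) (hv : v ∈ C) (huT : u ⊆ T) (hvT : v ⊆ T)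
    (hodd : (u ∩ v).card % 2 = 1) {c : Finset α} (hc : c ⊆ T) :
    ∃ x ∈ C, x ⊆ T ∧ T.card < 2 * (c ∆ x).card := by
  classical
  obtain ⟨V, hV⟩ : ∃ V : Finset (Finset α), ∀ x, x ∈ V ↔ x ∈ C ∧ x ⊆ T :=
    ⟨T.powerset.filter (· ∈ C), fun x => by simp [and_comm]⟩
  have hsum := two_mul_sum_card hC hT hV hc
  by_contra! hcon
  have hle : ∀ x ∈ V, 2 * (c ∆ x).card ≤ T.card :=
    fun x hx => hcon x ((hV x).1 hx).1 ((hV x).1 hx).2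
  have heq : ∀ x ∈ V, 2 * (c ∆ x).card = T.card := by
    refine (Finset.sum_eq_sum_iff_of_le hle).1 ?_
    rw [← Finset.mul_sum, hsum, Finset.sum_const, smul_eq_mul]
  have huvT : u ∆ v ⊆ T := by
    intro b hb
    rcases Finset.mem_symmDiff.1 hb with h | h
    · exact huT h.1
    · exact hvT h.1
  have e0 := heq ∅ ((hV _).2 ⟨hC.empty, Finset.empty_subset _⟩)
  have e1 := heq u ((hV _).2 ⟨hu, huT⟩)
  have e2 := heq v ((hV _).2 ⟨hv, hvT⟩)
  have e3 := heq (u ∆ v) ((hV _).2 ⟨hC.symm u hu v hv, huvT⟩)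
  have f0 := card_symmDiff_add c ∅
  have f1 := card_symmDiff_add c u
  have f2 := card_symmDiff_add c v
  have f3 := card_symmDiff_add c (u ∆ v)
  have f4 := card_symmDiff_add u v
  have f5 := card_symmDiff_add (c ∩ u) (c ∩ v)
  have g1 : c ∩ (u ∆ v) = (c ∩ u) ∆ (c ∩ v) := by
    ext a
    simp only [Finset.mem_inter, Finset.mem_symmDiff]
    tauto
  rw [g1] at f3
  simp only [Finset.card_empty, Finset.inter_empty] at f0
  omega

/-! ### Reductions of a minimal counterexample -/

namespace MinCex

variable {m : ℕ} {L : ℕ → ℕ} {C : Set (Finset α)} {A : Finset α}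

/-- Deleting the points of `T`: a heavy word of the punctured code can be corrected by words
inside `T` without changing it outside `T`. -/
theorem puncture (h : MinCex m L C A) {T : Finset α} (hTA : T ⊆ A) (hT0 : T.Nonempty) (g : ℕ)
    (hg : ∀ c ⊆ T, ∃ x ∈ C, x ⊆ T ∧ g ≤ (c ∆ x).card) :
    L (A.card - T.card) + g < L A.card := by
  have hcard : (A \ T).card = A.card - T.card := Finset.card_sdiff_of_subset hTA
  have hpos := hT0.card_pos
  have hle := Finset.card_le_card hTA
  have hcode : IsCode m {d | ∃ c ∈ C, c \ T = d} (A \ T) := by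
    refine ⟨⟨∅, h.code.empty, by simp⟩, ?_, ?_, ?_⟩
    · rintro _ ⟨u, hu, rfl⟩ _ ⟨v, hv, rfl⟩
      refine ⟨u ∆ v, h.code.symm u hu v hv, ?_⟩
      ext a
      simp only [Finset.mem_sdiff, Finset.mem_symmDiff]
      tauto
    · rintro _ ⟨u, hu, rfl⟩
      exact Finset.sdiff_subset_sdiff (h.code.sub u hu) subset_rfl
    · intro a ha
      obtain ⟨haA, haT⟩ := Finset.mem_sdiff.1 ha
      obtain ⟨u, hu, hau, hum⟩ := h.code.cover a haA
      exact ⟨u \ T, ⟨u, hu, rfl⟩, Finset.mem_sdiff.2 ⟨hau, haT⟩,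
        (Finset.card_le_card Finset.sdiff_subset).trans hum⟩
  obtain ⟨_, ⟨c, hc, rfl⟩, hcL⟩ := h.ih (A \ T) _ (by omega) hcode
  obtain ⟨x, hx, hxT, hgx⟩ := hg (c ∩ T) Finset.inter_subset_right
  have hsm := h.small _ (h.code.symm c hc x hx)
  have h1 := Finset.card_sdiff_add_card_inter (c ∆ x) T
  have h2 : (c ∆ x) \ T = c \ T := by
    ext a
    have := @hxT a
    simp only [Finset.mem_sdiff, Finset.mem_symmDiff]
    tauto
  have h3 : (c ∆ x) ∩ T = (c ∩ T) ∆ x := by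
    ext a
    have := @hxT a
    simp only [Finset.mem_inter, Finset.mem_symmDiff]
    tauto
  rw [h2, h3] at h1
  rw [hcard] at hcL
  omega

theorem full_sub (h : MinCex m L C A) {T : Finset α} (hT : Full C T) : T ⊆ A := by
  intro a ha
  obtain ⟨x, hx, hax, -⟩ := hT a ha
  exact h.code.sub x hx hax

/-- A full set `T` contributes at least `⌈|T| / 2⌉`. -/
theorem half (h : MinCex m L C A) {T : Finset α} (hT : Full C T) (hT0 : 0 < T.card) :
    L (A.card - T.card) + (T.card + 1) / 2 < L A.card := by
  refine h.puncture (h.full_sub hT) (Finset.card_pos.1 hT0) _ fun c hc => ?_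
  obtain ⟨x, hx, hxT, hle⟩ := exists_half_le h.code hT hc
  exact ⟨x, hx, hxT, by omega⟩

/-- A full set `T` containing two words with odd intersection contributes more than
`|T| / 2`. -/
theorem half_odd (h : MinCex m L C A) {T : Finset α} (hT : Full C T) {u v : Finset α}
    (hu : u ∈ C) (hv : v ∈ C) (huT : u ⊆ T) (hvT : v ⊆ T) (hodd : (u ∩ v).card % 2 = 1) :
    L (A.card - T.card) + (T.card / 2 + 1) < L A.card := by
  have hne : T.Nonempty := by
    have : 0 < (u ∩ v).card := by omega
    obtain ⟨a, ha⟩ := Finset.card_pos.1 this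
    exact ⟨a, huT (Finset.mem_inter.1 ha).1⟩
  refine h.puncture (h.full_sub hT) hne _ fun c hc => ?_
  obtain ⟨x, hx, hxT, hle⟩ := exists_half_lt h.code hT hu hv huT hvT hodd hc
  exact ⟨x, hx, hxT, by omega⟩

/-- If the points outside `T` are covered by light words which avoid `T`, then any word inside
`T` can be added to a heavy word of the code outside `T`. -/
theorem isolated (h : MinCex m L C A) {T : Finset α} (hTA : T ⊆ A) (hT0 : T.Nonempty)
    (hiso : ∀ a ∈ A, a ∉ T → ∃ c ∈ C, a ∈ c ∧ c.card ≤ m ∧ Disjoint c T)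
    {x : Finset α} (hx : x ∈ C) (hxT : x ⊆ T) :
    L (A.card - T.card) + x.card < L A.card := by
  have hcard : (A \ T).card = A.card - T.card := Finset.card_sdiff_of_subset hTA
  have hpos := hT0.card_pos
  have hle := Finset.card_le_card hTA
  have hcode : IsCode m {d | d ∈ C ∧ Disjoint d T} (A \ T) := by
    refine ⟨⟨h.code.empty, by simp⟩, ?_, ?_, ?_⟩
    · rintro u ⟨hu, huT⟩ v ⟨hv, hvT⟩
      refine ⟨h.code.symm u hu v hv, ?_⟩
      rw [Finset.disjoint_left] at huT hvT ⊢
      intro a ha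
      rcases Finset.mem_symmDiff.1 ha with h | h
      · exact huT h.1
      · exact hvT h.1
    · rintro u ⟨hu, huT⟩
      exact Finset.subset_sdiff.2 ⟨h.code.sub u hu, huT⟩
    · intro a ha
      obtain ⟨haA, haT⟩ := Finset.mem_sdiff.1 ha
      obtain ⟨c, hc, hac, hcm, hcT⟩ := hiso a haA haT
      exact ⟨c, ⟨hc, hcT⟩, hac, hcm⟩
  obtain ⟨c, ⟨hc, hcT⟩, hcL⟩ := h.ih (A \ T) _ (by omega) hcode
  have hsm := h.small _ (h.code.symm c hc x hx)
  have h1 := card_symmDiff_add c x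
  have h2 : (c ∩ x).card = 0 := by
    rw [Finset.card_eq_zero, ← Finset.disjoint_iff_inter_eq_empty]
    exact Finset.disjoint_of_subset_right hxT hcT
  rw [hcard] at hcL
  omega

end MinCex

/-! ### The lower bound functions and the cases `m = 1` and `m = 3` -/

/-- `⌈2n/3⌉`, which is `U(n,2) = U(n,3)`. -/
def low3 (n : ℕ) : ℕ := n - n / 3

/-- The values `0, 1, 2, 2, 3, 4, 4` for `n < 7`, continued by `low5 (n + 7) = low5 n + 4`;
this is `U(n,4) = U(n,5)`. -/
def low5 (n : ℕ) : ℕ := 4 * (n / 7) + (n % 7 - n % 7 / 3)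

theorem no_minCex_one (C : Set (Finset α)) (A : Finset α) : ¬ MinCex 1 id C A := by
  intro h
  have hA : 0 < A.card := by
    have := h.small ∅ h.code.empty
    simpa using this
  obtain ⟨a, ha⟩ := Finset.card_pos.1 hA
  obtain ⟨u, hu, hau, hu1⟩ := h.code.cover a ha
  have h0 : 0 < u.card := Finset.card_pos.2 ⟨a, hau⟩
  have h1 := h.half (Full.self hu) h0
  simp only [id] at h1
  omega

/-- Words of weight `1` and `3` are removed by averaging. The remaining light words have weight
`2`; two of them meeting in a point would span a full set of size `3`, so they are disjoint and
each can be split off. -/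
theorem no_minCex_three (C : Set (Finset α)) (A : Finset α) : ¬ MinCex 3 low3 C A := by
  intro h
  have hF : ∀ T, Full C T → T.card ≠ 1 ∧ T.card ≠ 3 := by
    intro T hT
    have hle := Finset.card_le_card (h.full_sub hT)
    constructor <;> intro hc <;> have h1 := h.half hT (by omega) <;> rw [hc] at h1 hle <;>
      simp only [low3] at h1 <;> omega
  have hwt : ∀ u ∈ C, u.card ≤ 3 → u.Nonempty → u.card = 2 := by
    intro u hu h3 hne
    have h0 := hne.card_pos
    have h1 := hF u (Full.self hu)
    omega
  have hA : 0 < A.card := by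
    by_contra h0
    have := h.small ∅ h.code.empty
    have h0 : A.card = 0 := by omega
    rw [h0] at this
    simp [low3] at this
  obtain ⟨a, ha⟩ := Finset.card_pos.1 hA
  obtain ⟨p, hp, hap, hp3⟩ := h.code.cover a ha
  have hp2 := hwt p hp hp3 ⟨a, hap⟩
  have hpA := h.code.sub p hp
  have hle := Finset.card_le_card hpA
  have hiso := h.isolated hpA ⟨a, hap⟩ (fun b hb hbp => by
    obtain ⟨w, hw, hbw, hw3⟩ := h.code.cover b hb
    have hw2 := hwt w hw hw3 ⟨b, hbw⟩
    refine ⟨w, hw, hbw, hw3, ?_⟩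
    rw [Finset.disjoint_iff_inter_eq_empty, ← Finset.card_eq_zero]
    have h1 := Finset.card_union_add_card_inter w p
    have h2 := hF _ ((Full.self hw).union (Full.self hp))
    have h3 : (w ∩ p).card < w.card := Finset.card_lt_card
      ⟨Finset.inter_subset_left, fun hs => hbp (Finset.mem_inter.1 (hs hbw)).2⟩
    omega) hp subset_rfl
  rw [hp2] at hiso hle
  simp only [low3] at hiso
  omega

/-! ### Light words of weight 2 and 4 for `m = 5` -/

/-- Words which pairwise meet only inside `P` can be summed to a word that covers all of their
points outside `P`. -/
theorem exists_pencil_sum {m : ℕ} {C : Set (Finset α)} {A : Finset α} (hC : IsCode m C A)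
    (P : Finset α) (S : Finset (Finset α)) (hS : ∀ y ∈ S, y ∈ C)
    (hP : ∀ y ∈ S, ∀ z ∈ S, y ≠ z → y ∩ z ⊆ P) :
    ∃ X ∈ C, ∀ a ∉ P, a ∈ X ↔ ∃ y ∈ S, a ∈ y := by
  induction S using Finset.induction_on with
  | empty => exact ⟨∅, hC.empty, by simp⟩
  | insert y S hyS ih =>
    obtain ⟨X, hX, hXS⟩ := ih (fun z hz => hS z (Finset.mem_insert_of_mem hz))
      (fun z hz z' hz' => hP z (Finset.mem_insert_of_mem hz) z' (Finset.mem_insert_of_mem hz'))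
    refine ⟨X ∆ y, hC.symm X hX y (hS y (Finset.mem_insert_self _ _)), fun a ha => ?_⟩
    have h1 := hXS a ha
    have h2 : a ∈ y → ¬ ∃ z ∈ S, a ∈ z := by
      rintro hay ⟨z, hz, haz⟩
      refine ha (hP y (Finset.mem_insert_self _ _) z (Finset.mem_insert_of_mem hz) ?_
        (Finset.mem_inter.2 ⟨hay, haz⟩))
      rintro rfl
      exact hyS hz
    rw [Finset.mem_symmDiff, h1]
    simp only [Finset.mem_insert, exists_eq_or_imp]
    by_cases hay : a ∈ y
    · simp [hay, h2 hay]
    · simp [hay]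

theorem low5_mono {a b : ℕ} (h : a ≤ b) : low5 a ≤ low5 b := by
  simp only [low5]
  omega

theorem low5_add_le (n k : ℕ) : low5 (n + 6 + k) ≤ low5 n + 4 + k := by
  simp only [low5]
  omega

namespace MinCex

variable {C : Set (Finset α)} {A : Finset α}

/-- Each of the sizes `t = 1, 3, 7` satisfies `low5 n ≤ low5 (n - t) + (t + 1) / 2`. -/
theorem card_ne (h : MinCex 5 low5 C A) {T : Finset α} (hT : Full C T) :
    T.card ≠ 1 ∧ T.card ≠ 3 ∧ T.card ≠ 7 := by
  have hle := Finset.card_le_card (h.full_sub hT)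
  refine ⟨?_, ?_, ?_⟩ <;> intro hc <;> have h1 := h.half hT (by omega) <;> rw [hc] at h1 hle <;>
    simp only [low5] at h1 <;> omega

/-- Each of the sizes `t = 6, 8, 10, 14` satisfies `low5 n ≤ low5 (n - t) + (t / 2 + 1)`. -/
theorem card_ne_of_odd (h : MinCex 5 low5 C A) {T : Finset α} (hT : Full C T) {u v : Finset α}
    (hu : u ∈ C) (hv : v ∈ C) (huT : u ⊆ T) (hvT : v ⊆ T) (hodd : (u ∩ v).card % 2 = 1) :
    T.card ≠ 6 ∧ T.card ≠ 8 ∧ T.card ≠ 10 ∧ T.card ≠ 14 := by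
  have hle := Finset.card_le_card (h.full_sub hT)
  have h1 := h.half_odd hT hu hv huT hvT hodd
  refine ⟨?_, ?_, ?_, ?_⟩ <;> intro hc <;> rw [hc] at h1 hle <;>
    simp only [low5] at h1 <;> omega

theorem weight (h : MinCex 5 low5 C A) {u : Finset α} (hu : u ∈ C) (h5 : u.card ≤ 5)
    (hne : u.Nonempty) : u.card = 2 ∨ u.card = 4 ∨ u.card = 5 := by
  have h0 := hne.card_pos
  have h1 := h.card_ne (Full.self hu)
  omega

/-- Words of weight `5` are disjoint from those of weight `2` and `4`, and meet each other in
one point. -/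
theorem inter_five (h : MinCex 5 low5 C A) {u v : Finset α} (hu : u ∈ C) (hv : v ∈ C)
    (hu5 : u.card = 5) (hne : u ≠ v) :
    (v.card = 2 ∨ v.card = 4 → (u ∩ v).card = 0) ∧ (v.card = 5 → (u ∩ v).card = 1) := by
  have hfull := (Full.self hu).union (Full.self hv)
  have h1 := Finset.card_union_add_card_inter u v
  have h2 := h.card_ne hfull
  have h3 := h.card_ne_of_odd hfull hu hu Finset.subset_union_left Finset.subset_union_left
    (by rw [Finset.inter_self]; omega)
  have h4 := card_symmDiff_add u v
  have h5 := h.card_ne (Full.self (h.code.symm u hu v hv))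
  have h6 := Finset.card_le_card (Finset.inter_subset_left : u ∩ v ⊆ u)
  have h7 := Finset.card_le_card (Finset.inter_subset_right : u ∩ v ⊆ v)
  have h8 : (u ∆ v).card ≠ 0 := by
    rw [Finset.card_ne_zero, Finset.nonempty_iff_ne_empty]
    exact fun h0 => hne (symmDiff_eq_bot.1 h0)
  omega

theorem disjoint_five (h : MinCex 5 low5 C A) {u v : Finset α} (hu : u ∈ C) (hv : v ∈ C)
    (hu5 : u.card = 5) (hv24 : v.card = 2 ∨ v.card = 4) : Disjoint u v := by
  rw [Finset.disjoint_iff_inter_eq_empty, ← Finset.card_eq_zero]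
  refine (h.inter_five hu hv hu5 ?_).1 hv24
  rintro rfl
  omega

/-- A word of weight `2` cannot meet a word of weight `4` in one point: their union would have
to be isolated, and then the word of weight `4` is a sufficient contribution. -/
theorem inter_two_four (h : MinCex 5 low5 C A) {p v : Finset α} (hp : p ∈ C) (hv : v ∈ C)
    (hp2 : p.card = 2) (hv4 : v.card = 4) : (p ∩ v).card ≠ 1 := by
  intro h1
  have hfull := (Full.self hp).union (Full.self hv)
  have hU := Finset.card_union_add_card_inter p v
  have hUA := h.full_sub hfull
  have hle := Finset.card_le_card hUA
  have hT : (p ∪ v).card = 5 := by omega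
  have hiso := h.isolated hUA (Finset.card_pos.1 (by omega)) (fun b hb hbT => by
    obtain ⟨w, hw, hbw, hw5⟩ := h.code.cover b hb
    refine ⟨w, hw, hbw, hw5, ?_⟩
    by_contra hdis
    have hlt : (w ∩ (p ∪ v)).card < w.card := Finset.card_lt_card
      ⟨Finset.inter_subset_left, fun hs => hbT (Finset.mem_inter.1 (hs hbw)).2⟩
    have hpos : (w ∩ (p ∪ v)).card ≠ 0 := by
      rwa [Ne, Finset.card_eq_zero, ← Finset.disjoint_iff_inter_eq_empty]
    have hfull' := (Full.self hw).union hfull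
    have hU' := Finset.card_union_add_card_inter w (p ∪ v)
    have h2 := h.card_ne hfull'
    have h3 := h.card_ne_of_odd hfull' hp hv
      (Finset.subset_union_left.trans Finset.subset_union_right)
      (Finset.subset_union_right.trans Finset.subset_union_right) (by omega)
    rcases h.weight hw hw5 ⟨b, hbw⟩ with h4 | h4 | h4
    · omega
    · omega
    · refine hdis (Finset.disjoint_union_right.2 ⟨?_, ?_⟩)
      · exact h.disjoint_five hw hp h4 (Or.inl hp2)
      · exact h.disjoint_five hw hv h4 (Or.inr hv4)) hv Finset.subset_union_right
  rw [hT, hv4] at hiso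
  simp only [low5] at hiso
  omega

/-- A word `p` of weight `2` can be split off: a word of weight `4` meeting `p` contains it, and
can be replaced by its sum with `p`. -/
theorem card_ne_two (h : MinCex 5 low5 C A) {p : Finset α} (hp : p ∈ C) : p.card ≠ 2 := by
  intro hp2
  have hpA := h.code.sub p hp
  have hle := Finset.card_le_card hpA
  have hiso := h.isolated hpA (Finset.card_pos.1 (by omega)) (fun b hb hbp => by
    obtain ⟨w, hw, hbw, hw5⟩ := h.code.cover b hb
    have hU := Finset.card_union_add_card_inter w p
    have hS := card_symmDiff_add w p
    have hlt : (w ∩ p).card < w.card := Finset.card_lt_card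
      ⟨Finset.inter_subset_left, fun hs => hbp (Finset.mem_inter.1 (hs hbw)).2⟩
    have hle' := Finset.card_le_card (Finset.inter_subset_right : w ∩ p ⊆ p)
    have hdis : (w ∩ p).card = 0 → Disjoint w p := fun h0 => by
      rwa [Finset.disjoint_iff_inter_eq_empty, ← Finset.card_eq_zero]
    by_cases h0 : (w ∩ p).card = 0
    · exact ⟨w, hw, hbw, hw5, hdis h0⟩
    have h2 := h.card_ne ((Full.self hw).union (Full.self hp))
    rcases h.weight hw hw5 ⟨b, hbw⟩ with h4 | h4 | h4
    · omega
    · have h5 := h.inter_two_four hp hw hp2 h4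
      rw [Finset.inter_comm] at h5
      have hpw : p ⊆ w := by
        rw [← Finset.inter_eq_right]
        exact Finset.eq_of_subset_of_card_le Finset.inter_subset_right (by omega)
      refine ⟨w ∆ p, h.code.symm w hw p hp, Finset.mem_symmDiff.2 (Or.inl ⟨hbw, hbp⟩),
        by omega, ?_⟩
      rw [Finset.disjoint_left]
      intro a ha hap
      rcases Finset.mem_symmDiff.1 ha with h6 | h6
      · exact h6.2 hap
      · exact h6.2 (hpw hap)
    · exact ⟨w, hw, hbw, hw5, h.disjoint_five hw hp h4 (Or.inl hp2)⟩) hp subset_rfl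
  rw [hp2] at hiso hle
  simp only [low5] at hiso
  omega

/-- Unions of size `7` and sums of weight `2` are excluded. -/
theorem inter_four (h : MinCex 5 low5 C A) {u v : Finset α} (hu : u ∈ C) (hv : v ∈ C)
    (hu4 : u.card = 4) (hv4 : v.card = 4) (hne : u ≠ v) :
    (u ∩ v).card = 0 ∨ (u ∩ v).card = 2 := by
  have hU := Finset.card_union_add_card_inter u v
  have hS := card_symmDiff_add u v
  have h1 := h.card_ne ((Full.self hu).union (Full.self hv))
  have h2 := h.card_ne_two (h.code.symm u hu v hv)
  have h8 : (u ∆ v).card ≠ 0 := by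
    rw [Finset.card_ne_zero, Finset.nonempty_iff_ne_empty]
    exact fun h0 => hne (symmDiff_eq_bot.1 h0)
  omega

/-- If a word of weight `4` is disjoint from all others it can be split off. Otherwise there are
two such words meeting in a pair `P`; the union `T` of all words of weight `4` containing `P`
is then isolated, and contains a word covering `T \ P`. -/
theorem card_ne_four (h : MinCex 5 low5 C A) {u : Finset α} (hu : u ∈ C) : u.card ≠ 4 := by
  classical
  intro hu4
  by_cases hall : ∀ v ∈ C, v.card = 4 → u ≠ v → (u ∩ v).card = 0
  · have huA := h.code.sub u hu
    have hle := Finset.card_le_card huA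
    have hiso := h.isolated huA (Finset.card_pos.1 (by omega)) (fun b hb hbu => by
      obtain ⟨w, hw, hbw, hw5⟩ := h.code.cover b hb
      refine ⟨w, hw, hbw, hw5, ?_⟩
      rcases h.weight hw hw5 ⟨b, hbw⟩ with h4 | h4 | h4
      · exact absurd h4 (h.card_ne_two hw)
      · refine Disjoint.symm ?_
        rw [Finset.disjoint_iff_inter_eq_empty, ← Finset.card_eq_zero]
        refine hall w hw h4 ?_
        rintro rfl
        exact hbu hbw
      · exact h.disjoint_five hw hu h4 (Or.inr hu4)) hu subset_rfl
    rw [hu4] at hiso hle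
    simp only [low5] at hiso
    omega
  · push Not at hall
    obtain ⟨v, hv, hv4, huv, hne0⟩ := hall
    have huv2 : (u ∩ v).card = 2 := by
      have := h.inter_four hu hv hu4 hv4 huv
      omega
    obtain ⟨P, hPdef⟩ : ∃ P, P = u ∩ v := ⟨_, rfl⟩
    have hP2 : P.card = 2 := by rw [hPdef, huv2]
    obtain ⟨S, hS⟩ : ∃ S : Finset (Finset α), ∀ y, y ∈ S ↔ y ∈ C ∧ y.card = 4 ∧ P ⊆ y := by
      refine ⟨A.powerset.filter fun y => y ∈ C ∧ y.card = 4 ∧ P ⊆ y, fun y => ?_⟩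
      simp only [Finset.mem_filter, Finset.mem_powerset, and_iff_right_iff_imp]
      exact fun hy => h.code.sub y hy.1
    have huS : u ∈ S := (hS u).2 ⟨hu, hu4, hPdef ▸ Finset.inter_subset_left⟩
    have hvS : v ∈ S := (hS v).2 ⟨hv, hv4, hPdef ▸ Finset.inter_subset_right⟩
    have hSS : ∀ y ∈ S, ∀ z ∈ S, y ≠ z → y ∩ z = P := by
      intro y hy z hz hyz
      obtain ⟨hyC, hy4, hyP⟩ := (hS y).1 hy
      obtain ⟨hzC, hz4, hzP⟩ := (hS z).1 hz
      have h1 := h.inter_four hyC hzC hy4 hz4 hyz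
      have h2 := Finset.subset_inter hyP hzP
      have h3 := Finset.card_le_card h2
      exact (Finset.eq_of_subset_of_card_le h2 (by omega)).symm
    obtain ⟨X, hX, hXS⟩ := exists_pencil_sum h.code P S (fun y hy => ((hS y).1 hy).1)
      (fun y hy z hz hyz => (hSS y hy z hz hyz).subset)
    obtain ⟨T, hT⟩ : ∃ T : Finset α, ∀ a, a ∈ T ↔ ∃ y ∈ S, a ∈ y :=
      ⟨S.biUnion id, fun a => by simp⟩
    have hTsub : ∀ y ∈ S, y ⊆ T := fun y hy a ha => (hT a).2 ⟨y, hy, ha⟩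
    have hPT : P ⊆ T := ((hS u).1 huS).2.2.trans (hTsub u huS)
    have hXT : X ⊆ T := by
      intro a ha
      by_cases haP : a ∈ P
      · exact hPT haP
      · exact (hT a).2 ((hXS a haP).1 ha)
    have hTX : T \ P ⊆ X := by
      intro a ha
      obtain ⟨haT, haP⟩ := Finset.mem_sdiff.1 ha
      exact (hXS a haP).2 ((hT a).1 haT)
    have hTA : T ⊆ A := by
      intro a ha
      obtain ⟨y, hy, hay⟩ := (hT a).1 ha
      exact h.code.sub y ((hS y).1 hy).1 hay
    have hT6 : 6 ≤ T.card := by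
      have h1 := Finset.card_le_card (Finset.union_subset (hTsub u huS) (hTsub v hvS))
      have h2 := Finset.card_union_add_card_inter u v
      omega
    have hXcard : T.card ≤ X.card + 2 := by
      have h1 := Finset.card_le_card hTX
      rw [Finset.card_sdiff_of_subset hPT] at h1
      omega
    have hle := Finset.card_le_card hTA
    have hiso := h.isolated hTA (Finset.card_pos.1 (by omega)) (fun b hb hbT => by
      obtain ⟨w, hw, hbw, hw5⟩ := h.code.cover b hb
      refine ⟨w, hw, hbw, hw5, ?_⟩
      have hwS : w ∉ S := fun hwS => hbT (hTsub w hwS hbw)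
      rcases h.weight hw hw5 ⟨b, hbw⟩ with h4 | h4 | h4
      · exact absurd h4 (h.card_ne_two hw)
      · rw [Finset.disjoint_left]
        intro a haw haT
        obtain ⟨y, hy, hay⟩ := (hT a).1 haT
        obtain ⟨hyC, hy4, hyP⟩ := (hS y).1 hy
        have hmeet : ∀ z ∈ S, (w ∩ z).card = 0 ∨ (w ∩ z).card = 2 := by
          intro z hz
          refine h.inter_four hw ((hS z).1 hz).1 h4 ((hS z).1 hz).2.1 ?_
          rintro rfl
          exact hwS hz
        have hwy : (w ∩ y).card = 2 := by
          have h1 := hmeet y hy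
          have h2 : 0 < (w ∩ y).card := Finset.card_pos.2 ⟨a, Finset.mem_inter.2 ⟨haw, hay⟩⟩
          omega
        have hwP : (w ∩ P).card ≤ 1 := by
          have h1 : (w ∩ P).card ≤ P.card := Finset.card_le_card Finset.inter_subset_right
          by_contra h2
          refine hwS ((hS w).2 ⟨hw, h4, ?_⟩)
          rw [← Finset.inter_eq_right]
          exact Finset.eq_of_subset_of_card_le Finset.inter_subset_right (by omega)
        have hPsub : ∀ z ∈ S, w ∩ P ⊆ w ∩ z := fun z hz =>
          Finset.inter_subset_inter subset_rfl ((hS z).1 hz).2.2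
        rcases Nat.le_one_iff_eq_zero_or_eq_one.1 hwP with hP0 | hP1
        · -- `w` contains `y \ P`, so `w ∆ y` is again a word of weight `4` containing `P`
          have h1 : w ∆ y ∈ S := by
            refine (hS _).2 ⟨h.code.symm w hw y hyC, ?_, ?_⟩
            · have := card_symmDiff_add w y
              omega
            · intro c hc
              refine Finset.mem_symmDiff.2 (Or.inr ⟨hyP hc, fun hcw => ?_⟩)
              rw [Finset.card_eq_zero] at hP0
              exact Finset.notMem_empty c (hP0 ▸ Finset.mem_inter.2 ⟨hcw, hc⟩)
          by_cases hby : b ∈ y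
          · exact hbT (hTsub y hy hby)
          · exact hbT (hTsub _ h1 (Finset.mem_symmDiff.2 (Or.inl ⟨hbw, hby⟩)))
        · -- `w` meets `u ∪ v` in three points, so `u ∪ v ∪ w` has size `7`
          have hwu : (w ∩ u).card = 2 := by
            have h1 := hmeet u huS
            have h2 := Finset.card_le_card (hPsub u huS)
            omega
          have hwv : (w ∩ v).card = 2 := by
            have h1 := hmeet v hvS
            have h2 := Finset.card_le_card (hPsub v hvS)
            omega
          have h1 := Finset.card_union_add_card_inter w (u ∪ v)
          have h2 := Finset.card_union_add_card_inter (w ∩ u) (w ∩ v)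
          have h3 := Finset.card_union_add_card_inter u v
          have h5 : (w ∩ u) ∩ (w ∩ v) = w ∩ P := by
            rw [hPdef, ← Finset.inter_inter_distrib_left]
          rw [← Finset.inter_union_distrib_left, h5] at h2
          have h6 := h.card_ne ((Full.self hw).union ((Full.self hu).union (Full.self hv)))
          omega
      · rw [Finset.disjoint_left]
        intro a haw haT
        obtain ⟨y, hy, hay⟩ := (hT a).1 haT
        obtain ⟨hyC, hy4, -⟩ := (hS y).1 hy
        exact Finset.disjoint_left.1 (h.disjoint_five hw hyC h4 (Or.inr hy4)) haw hay) hX hXT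
    have h1 := low5_add_le (A.card - T.card) (T.card - 6)
    have h2 : A.card - T.card + 6 + (T.card - 6) = A.card := by omega
    rw [h2] at h1
    omega

end MinCex

/-! ### Words of weight 5 -/

namespace MinCex

variable {C : Set (Finset α)} {A : Finset α}

theorem light_card (h : MinCex 5 low5 C A) {u : Finset α} (hu : u ∈ C) (h5 : u.card ≤ 5)
    (hne : u.Nonempty) : u.card = 5 := by
  have h1 := h.weight hu h5 hne
  have h2 := h.card_ne_two hu
  have h3 := h.card_ne_four hu
  omega

/-- Four words of weight `5` in general position span a full set of size `14`; so among any four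
of them some three are concurrent. -/
theorem exists_concurrent (h : MinCex 5 low5 C A) {a b c d : Finset α}
    (ha : a ∈ C) (hb : b ∈ C) (hc : c ∈ C) (hd : d ∈ C)
    (ha5 : a.card = 5) (hb5 : b.card = 5) (hc5 : c.card = 5) (hd5 : d.card = 5)
    (hab : a ≠ b) (hac : a ≠ c) (had : a ≠ d) (hbc : b ≠ c) (hbd : b ≠ d) (hcd : c ≠ d) :
    ∃ p, (p ∈ a ∧ p ∈ b ∧ p ∈ c) ∨ (p ∈ a ∧ p ∈ b ∧ p ∈ d) ∨ (p ∈ a ∧ p ∈ c ∧ p ∈ d) ∨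
      (p ∈ b ∧ p ∈ c ∧ p ∈ d) := by
  by_contra! hcon
  have e1 := (h.inter_five ha hb ha5 hab).2 hb5
  have e2 := (h.inter_five hc ha hc5 hac.symm).2 ha5
  have e3 := (h.inter_five hc hb hc5 hbc.symm).2 hb5
  have e4 := (h.inter_five hd ha hd5 had.symm).2 ha5
  have e5 := (h.inter_five hd hb hd5 hbd.symm).2 hb5
  have e6 := (h.inter_five hd hc hd5 hcd.symm).2 hc5
  have f1 := Finset.card_union_add_card_inter a b
  have f2 := Finset.card_union_add_card_inter c (a ∪ b)
  have f3 := Finset.card_union_add_card_inter d (c ∪ (a ∪ b))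
  have g1 : (c ∩ (a ∪ b)).card = 2 := by
    rw [Finset.inter_union_distrib_left, Finset.card_union_of_disjoint, e2, e3]
    rw [Finset.disjoint_left]
    intro p hp hp'
    have := hcon p
    simp only [Finset.mem_inter] at hp hp'
    tauto
  have g2 : (d ∩ (c ∪ (a ∪ b))).card = 3 := by
    rw [Finset.inter_union_distrib_left, Finset.inter_union_distrib_left,
      Finset.card_union_of_disjoint, Finset.card_union_of_disjoint, e4, e5, e6]
    · rw [Finset.disjoint_left]
      intro p hp hp'
      have := hcon p
      simp only [Finset.mem_inter] at hp hp'
      tauto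
    · rw [Finset.disjoint_left]
      intro p hp hp'
      have := hcon p
      simp only [Finset.mem_inter, Finset.mem_union] at hp hp'
      tauto
  have hfull := (Full.self hd).union ((Full.self hc).union ((Full.self ha).union (Full.self hb)))
  have h1 := h.card_ne_of_odd hfull hd hd Finset.subset_union_left Finset.subset_union_left
    (by rw [Finset.inter_self]; omega)
  omega

/-- Two distinct words of weight `5` have at most one point in common. -/
theorem eq_of_mem (h : MinCex 5 low5 C A) {a b : Finset α} (ha : a ∈ C) (hb : b ∈ C)
    (ha5 : a.card = 5) (hb5 : b.card = 5) (hab : a ≠ b) {p q : α}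
    (hpa : p ∈ a) (hpb : p ∈ b) (hqa : q ∈ a) (hqb : q ∈ b) : p = q :=
  Finset.card_le_one.1 ((h.inter_five ha hb ha5 hab).2 hb5).le p
    (Finset.mem_inter.2 ⟨hpa, hpb⟩) q (Finset.mem_inter.2 ⟨hqa, hqb⟩)

/-- All but at most one word of weight `5` pass through a suitable point `z`: any point on three
such words will do, and if there is none then any point on two of them. -/
theorem exists_near_pencil (h : MinCex 5 low5 C A) {u v : Finset α} (hu : u ∈ C) (hv : v ∈ C)
    (hu5 : u.card = 5) (hv5 : v.card = 5) (huv : u ≠ v) :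
    ∃ z, (∃ a ∈ C, ∃ b ∈ C, a.card = 5 ∧ b.card = 5 ∧ a ≠ b ∧ z ∈ a ∧ z ∈ b) ∧
      ∀ w ∈ C, ∀ y ∈ C, w.card = 5 → y.card = 5 → z ∉ w → z ∉ y → w = y := by
  -- three of `a, b, w, y` are concurrent; as `a` and `b` meet only in `z`, which is not on
  -- `w` or `y`, these three include both `w` and `y`
  have key : ∀ z, ∀ a ∈ C, ∀ b ∈ C, ∀ w ∈ C, ∀ y ∈ C, a.card = 5 → b.card = 5 → w.card = 5 →
      y.card = 5 → a ≠ b → z ∈ a → z ∈ b → z ∉ w → z ∉ y → w ≠ y →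
      ∃ p, p ∈ w ∧ p ∈ y ∧ (p ∈ a ∨ p ∈ b) := by
    intro z a ha b hb w hw y hy ha5 hb5 hw5 hy5 hab hza hzb hzw hzy hwy
    have haw : a ≠ w := fun e => hzw (e ▸ hza)
    have hay : a ≠ y := fun e => hzy (e ▸ hza)
    have hbw : b ≠ w := fun e => hzw (e ▸ hzb)
    have hby : b ≠ y := fun e => hzy (e ▸ hzb)
    obtain ⟨p, hp⟩ := h.exists_concurrent ha hb hw hy ha5 hb5 hw5 hy5 hab haw hay hbw hby hwy
    rcases hp with ⟨h1, h2, h3⟩ | ⟨h1, h2, h3⟩ | ⟨h1, h2, h3⟩ | ⟨h1, h2, h3⟩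
    · exact absurd (h.eq_of_mem ha hb ha5 hb5 hab h1 h2 hza hzb ▸ h3) hzw
    · exact absurd (h.eq_of_mem ha hb ha5 hb5 hab h1 h2 hza hzb ▸ h3) hzy
    · exact ⟨p, h2, h3, Or.inl h1⟩
    · exact ⟨p, h2, h3, Or.inr h1⟩
  by_cases h3 : ∃ z, ∃ a ∈ C, ∃ b ∈ C, ∃ c ∈ C, a.card = 5 ∧ b.card = 5 ∧ c.card = 5 ∧
      a ≠ b ∧ a ≠ c ∧ b ≠ c ∧ z ∈ a ∧ z ∈ b ∧ z ∈ c
  · obtain ⟨z, a, ha, b, hb, c, hc, ha5, hb5, hc5, hab, hac, hbc, hza, hzb, hzc⟩ := h3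
    refine ⟨z, ⟨a, ha, b, hb, ha5, hb5, hab, hza, hzb⟩, ?_⟩
    intro w hw y hy hw5 hy5 hzw hzy
    by_contra hwy
    -- the common point of `w` and `y` lies on two of `a, b, c`, hence equals `z`
    obtain ⟨p, hpw, hpy, h1⟩ := key z a ha b hb w hw y hy ha5 hb5 hw5 hy5 hab hza hzb hzw hzy hwy
    obtain ⟨q, hqw, hqy, h2⟩ := key z a ha c hc w hw y hy ha5 hc5 hw5 hy5 hac hza hzc hzw hzy hwy
    obtain ⟨r, hrw, hry, h3⟩ := key z b hb c hc w hw y hy hb5 hc5 hw5 hy5 hbc hzb hzc hzw hzy hwy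
    obtain rfl := h.eq_of_mem hw hy hw5 hy5 hwy hpw hpy hqw hqy
    obtain rfl := h.eq_of_mem hw hy hw5 hy5 hwy hpw hpy hrw hry
    have hpz : p = z := by
      by_cases hpa : p ∈ a
      · rcases h3 with h3 | h3
        · exact h.eq_of_mem ha hb ha5 hb5 hab hpa h3 hza hzb
        · exact h.eq_of_mem ha hc ha5 hc5 hac hpa h3 hza hzc
      · exact h.eq_of_mem hb hc hb5 hc5 hbc (h1.resolve_left hpa) (h2.resolve_left hpa) hzb hzc
    exact hzw (hpz ▸ hpw)
  · have h1 := (h.inter_five hu hv hu5 huv).2 hv5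
    obtain ⟨z, hz⟩ := Finset.card_pos.1 (h1 ▸ Nat.one_pos)
    obtain ⟨hzu, hzv⟩ := Finset.mem_inter.1 hz
    refine ⟨z, ⟨u, hu, v, hv, hu5, hv5, huv, hzu, hzv⟩, ?_⟩
    intro w hw y hy hw5 hy5 hzw hzy
    by_contra hwy
    obtain ⟨p, hpw, hpy, hp⟩ :=
      key z u hu v hv w hw y hy hu5 hv5 hw5 hy5 huv hzu hzv hzw hzy hwy
    rcases hp with hp | hp
    · exact h3 ⟨p, u, hu, w, hw, y, hy, hu5, hw5, hy5, fun e => hzw (e ▸ hzu),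
        fun e => hzy (e ▸ hzu), hwy, hp, hpw, hpy⟩
    · exact h3 ⟨p, v, hv, w, hw, y, hy, hv5, hw5, hy5, fun e => hzw (e ▸ hzv),
        fun e => hzy (e ▸ hzv), hwy, hp, hpw, hpy⟩

end MinCex

/-- In a minimal counterexample all light words have weight `5`, and all but at most one of them
pass through a common point `z`. The sum of the words through `z` is heavy enough. -/
theorem no_minCex_five (C : Set (Finset α)) (A : Finset α) : ¬ MinCex 5 low5 C A := by
  classical
  intro h
  have hA : 0 < A.card := by
    by_contra h0
    have := h.small ∅ h.code.empty
    have h0 : A.card = 0 := by omega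
    rw [h0] at this
    simp [low5] at this
  obtain ⟨a, ha⟩ := Finset.card_pos.1 hA
  obtain ⟨u, hu, hau, hu5'⟩ := h.code.cover a ha
  have hu5 := h.light_card hu hu5' ⟨a, hau⟩
  by_cases hall : ∀ v ∈ C, v.card = 5 → u = v
  · have hAu : A ⊆ u := by
      intro b hb
      obtain ⟨w, hw, hbw, hw5⟩ := h.code.cover b hb
      rw [hall w hw (h.light_card hw hw5 ⟨b, hbw⟩)]
      exact hbw
    have h1 := low5_mono (Finset.card_le_card hAu)
    have h2 := h.small u hu
    rw [hu5] at h1 h2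
    simp only [low5] at h1 h2
    omega
  push Not at hall
  obtain ⟨v, hv, hv5, huv⟩ := hall
  obtain ⟨z, ⟨l, hl, l', hl', hl5, hk5, hll, hzl, hzl'⟩, hz⟩ :=
    h.exists_near_pencil hu hv hu5 hv5 huv
  obtain ⟨S, hS⟩ : ∃ S : Finset (Finset α), ∀ y, y ∈ S ↔ y ∈ C ∧ y.card = 5 ∧ z ∈ y := by
    refine ⟨A.powerset.filter fun y => y ∈ C ∧ y.card = 5 ∧ z ∈ y, fun y => ?_⟩
    simp only [Finset.mem_filter, Finset.mem_powerset, and_iff_right_iff_imp]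
    exact fun hy => h.code.sub y hy.1
  obtain ⟨X, hX, hXS⟩ := exists_pencil_sum h.code {z} S (fun y hy => ((hS y).1 hy).1)
    (fun y hy y' hy' hyy p hp => by
      obtain ⟨hyC, hy5, hzy⟩ := (hS y).1 hy
      obtain ⟨hyC', hy5', hzy'⟩ := (hS y').1 hy'
      obtain ⟨hp1, hp2⟩ := Finset.mem_inter.1 hp
      exact Finset.mem_singleton.2 (h.eq_of_mem hyC hyC' hy5 hy5' hyy hp1 hp2 hzy hzy'))
  obtain ⟨T, hT⟩ : ∃ T : Finset α, ∀ a, a ∈ T ↔ ∃ y ∈ S, a ∈ y :=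
    ⟨S.biUnion id, fun a => by simp⟩
  have hTsub : ∀ y ∈ S, y ⊆ T := fun y hy a ha => (hT a).2 ⟨y, hy, ha⟩
  have hT9 : 9 ≤ T.card := by
    have h1 := Finset.card_le_card (Finset.union_subset (hTsub l ((hS l).2 ⟨hl, hl5, hzl⟩))
      (hTsub l' ((hS l').2 ⟨hl', hk5, hzl'⟩)))
    have h2 := Finset.card_union_add_card_inter l l'
    have h3 := (h.inter_five hl hl' hl5 hll).2 hk5
    omega
  have hXcard : T.card ≤ X.card + 1 := by
    have h1 : T ⊆ insert z X := by
      intro b hb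
      by_cases hbz : b = z
      · exact Finset.mem_insert.2 (Or.inl hbz)
      · refine Finset.mem_insert_of_mem ((hXS b ?_).2 ((hT b).1 hb))
        simpa using hbz
    exact (Finset.card_le_card h1).trans (Finset.card_insert_le z X)
  have hAT : A.card ≤ T.card + 5 := by
    by_cases hoff : ∃ w ∈ C, w.card = 5 ∧ z ∉ w
    · obtain ⟨w, hw, hw5, hzw⟩ := hoff
      have h1 : A ⊆ T ∪ w := by
        intro b hb
        obtain ⟨y, hy, hby, hy5'⟩ := h.code.cover b hb
        have hy5 := h.light_card hy hy5' ⟨b, hby⟩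
        by_cases hzy : z ∈ y
        · exact Finset.mem_union_left _ ((hT b).2 ⟨y, (hS y).2 ⟨hy, hy5, hzy⟩, hby⟩)
        · rw [hz w hw y hy hw5 hy5 hzw hzy]
          exact Finset.mem_union_right _ hby
      have h2 := (Finset.card_le_card h1).trans (Finset.card_union_le T w)
      omega
    · push Not at hoff
      have h1 : A ⊆ T := by
        intro b hb
        obtain ⟨y, hy, hby, hy5'⟩ := h.code.cover b hb
        have hy5 := h.light_card hy hy5' ⟨b, hby⟩
        exact (hT b).2 ⟨y, (hS y).2 ⟨hy, hy5, hoff y hy hy5⟩, hby⟩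
      have h2 := Finset.card_le_card h1
      omega
  have h1 := h.small X hX
  have h2 := low5_mono hAT
  have h3 : low5 (T.card + 5) ≤ T.card - 1 := by
    simp only [low5]
    omega
  omega

end Codes

/-! ### From codes to matrices: the lower bound -/

/-- The code consists of the supports of the vectors `W x`; column `i` covers the point `i`. -/
theorem low_le_Mfun {n m : ℕ} {L : ℕ → ℕ}
    (hL : ∀ (C : Set (Finset (Fin n))) (A : Finset (Fin n)), ¬ MinCex m L C A)
    {W : Matrix (Fin n) (Fin n) (ZMod 2)} (hW : W ∈ Aset n m) : L n ≤ Mfun W 0 := by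
  obtain ⟨s, hs⟩ : ∃ s : (Fin n → ZMod 2) → Finset (Fin n),
      s = fun y => Finset.univ.filter fun i => y i ≠ 0 := ⟨_, rfl⟩
  have hmem : ∀ y i, i ∈ s y ↔ y i ≠ 0 := fun y i => by simp [hs]
  have hcard : ∀ y, (s y).card = hammingNorm y := fun y => by simp [hs, hammingNorm]
  have hcode : IsCode m {c | ∃ x, s (W.mulVec x) = c} (Finset.univ : Finset (Fin n)) := by
    refine ⟨⟨0, ?_⟩, ?_, fun _ _ => Finset.subset_univ _, ?_⟩
    · ext i
      simp [hmem]
    · rintro _ ⟨x, rfl⟩ _ ⟨y, rfl⟩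
      refine ⟨x + y, ?_⟩
      ext i
      rw [Finset.mem_symmDiff, hmem, hmem, hmem, Matrix.mulVec_add, Pi.add_apply]
      generalize W.mulVec x i = p
      generalize W.mulVec y i = q
      revert p q
      decide
    · intro i _
      have hcol : W.mulVec (Pi.single i 1) = fun k => W k i := by
        ext k
        simp
      refine ⟨_, ⟨Pi.single i 1, rfl⟩, ?_, ?_⟩
      · rw [hmem, hcol]
        simp [hW.1 i]
      · rw [hcard, hcol]
        exact hW.2 i
  obtain ⟨_, ⟨x, rfl⟩, hx⟩ := exists_word_of_no_minCex hL Finset.univ _ hcode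
  rw [Finset.card_univ, Fintype.card_fin, hcard] at hx
  refine hx.trans ?_
  have := Finset.le_sup (f := fun x : Fin n → ZMod 2 => hammingNorm (W.mulVec x + 0))
    (Finset.mem_univ x)
  simpa [Mfun] using this

/-! ### The upper bound -/

/-- Some matrix in `A(n,m)` lights at most `t` coordinates. -/
def Attains (n m t : ℕ) : Prop := ∃ W ∈ Aset n m, Mfun W 0 ≤ t

theorem hammingNorm_sum_elim {ι κ : Type*} [Fintype ι] [Fintype κ] (x : ι ⊕ κ → ZMod 2) :
    hammingNorm x = hammingNorm (fun i => x (Sum.inl i)) + hammingNorm (fun i => x (Sum.inr i)) := by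
  simp only [hammingNorm, Finset.card_filter, Fintype.sum_sum_type]

theorem hammingNorm_comp_equiv {ι κ : Type*} [Fintype ι] [Fintype κ] (e : ι ≃ κ)
    (x : κ → ZMod 2) : hammingNorm (fun i => x (e i)) = hammingNorm x := by
  simp only [hammingNorm, Finset.card_filter]
  exact e.sum_comp fun k => if x k ≠ 0 then 1 else 0

theorem Attains.mono {n m m' t t' : ℕ} (h : Attains n m t) (hm : m ≤ m') (ht : t ≤ t') :
    Attains n m' t' := by
  obtain ⟨W, hW, hWt⟩ := h
  exact ⟨W, ⟨hW.1, fun j => (hW.2 j).trans hm⟩, hWt.trans ht⟩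

/-- Block-diagonal sums. -/
theorem Attains.add {a b m s t : ℕ} (ha : Attains a m s) (hb : Attains b m t) :
    Attains (a + b) m (s + t) := by
  obtain ⟨V, hV, hVs⟩ := ha
  obtain ⟨W, hW, hWt⟩ := hb
  have hV' : ∀ x, hammingNorm (V.mulVec x) ≤ s := by
    intro x
    have := Finset.sup_le_iff.1 hVs x (Finset.mem_univ x)
    simpa using this
  have hW' : ∀ x, hammingNorm (W.mulVec x) ≤ t := by
    intro x
    have := Finset.sup_le_iff.1 hWt x (Finset.mem_univ x)
    simpa using this
  let e : Fin (a + b) ≃ Fin a ⊕ Fin b := finSumFinEquiv.symm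
  refine ⟨(Matrix.fromBlocks V 0 0 W).submatrix e e, ⟨fun i => ?_, fun j => ?_⟩, ?_⟩
  · rw [Matrix.submatrix_apply]
    rcases e i with k | k
    · exact hV.1 k
    · exact hW.1 k
  · simp only [Matrix.submatrix_apply]
    rw [hammingNorm_comp_equiv e fun i => Matrix.fromBlocks V 0 0 W i (e j), hammingNorm_sum_elim]
    rcases e j with k | k
    · change hammingNorm (fun i => V i k) + hammingNorm (0 : Fin b → ZMod 2) ≤ m
      rw [hammingNorm_zero, add_zero]
      exact hV.2 k
    · change hammingNorm (0 : Fin a → ZMod 2) + hammingNorm (fun i => W i k) ≤ m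
      rw [hammingNorm_zero, zero_add]
      exact hW.2 k
  · refine Finset.sup_le fun x _ => ?_
    rw [add_zero, Matrix.submatrix_mulVec_equiv]
    refine (hammingNorm_comp_equiv e _).trans_le ?_
    rw [Matrix.fromBlocks_mulVec, hammingNorm_sum_elim]
    simpa using add_le_add (hV' _) (hW' _)

theorem attains_zero (m : ℕ) : Attains 0 m 0 :=
  ⟨0, ⟨fun i => i.elim0, fun j => j.elim0⟩, Finset.sup_le fun x _ => by simp [hammingNorm]⟩

theorem attains_one : Attains 1 1 1 := by
  refine ⟨1, ⟨?_, ?_⟩, ?_⟩ <;> decide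

theorem attains_three : Attains 3 2 2 := by
  refine ⟨!![1, 1, 0; 0, 1, 1; 1, 0, 1], ⟨?_, ?_⟩, ?_⟩ <;> decide +kernel

/-- The circulant matrix of the words of weight `4` in the `[7,3,4]` simplex code. -/
theorem attains_seven : Attains 7 4 4 := by
  refine ⟨!![1, 0, 0, 1, 0, 1, 1; 1, 1, 0, 0, 1, 0, 1; 1, 1, 1, 0, 0, 1, 0;
    0, 1, 1, 1, 0, 0, 1; 1, 0, 1, 1, 1, 0, 0; 0, 1, 0, 1, 1, 1, 0; 0, 0, 1, 0, 1, 1, 1],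
    ⟨?_, ?_⟩, ?_⟩ <;> decide +kernel

theorem Attains.mul {a m s : ℕ} (h : Attains a m s) (q : ℕ) : Attains (a * q) m (s * q) := by
  induction q with
  | zero => exact attains_zero m
  | succ q ih => exact ih.add h

theorem attains_low3 (n : ℕ) : Attains n 2 (low3 n) := by
  have h1 := (attains_three.mul (n / 3)).add
    ((attains_one.mono one_le_two le_rfl).mul (n % 3))
  have e1 : 3 * (n / 3) + 1 * (n % 3) = n := by omega
  rw [e1] at h1
  exact h1.mono le_rfl (by simp only [low3]; omega)

theorem attains_low5 (n : ℕ) : Attains n 4 (low5 n) := by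
  have h1 := ((attains_seven.mul (n / 7)).add
    ((attains_three.mono (by omega : 2 ≤ 4) le_rfl).mul (n % 7 / 3))).add
    ((attains_one.mono (by omega : 1 ≤ 4) le_rfl).mul (n % 7 % 3))
  have e1 : 7 * (n / 7) + 3 * (n % 7 / 3) + 1 * (n % 7 % 3) = n := by omega
  rw [e1] at h1
  exact h1.mono le_rfl (by simp only [low5]; omega)

/-! ### Comparison with `U(n,m)` -/

theorem mu_eq_of_attains {n m M t : ℕ} (hm : m ≤ M) (ht : Attains n m t)
    (hlow : ∀ W ∈ Aset n M, t ≤ Mfun W 0) : mu n m = t := by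
  obtain ⟨W, hW, hWt⟩ := ht
  refine le_antisymm ((Nat.sInf_le (Set.mem_image_of_mem _ hW)).trans hWt) ?_
  refine le_csInf (Set.Nonempty.image _ ⟨W, hW⟩) ?_
  rintro _ ⟨V, hV, rfl⟩
  exact hlow V ⟨hV.1, fun j => (hV.2 j).trans hm⟩

theorem aseq_eq : ∀ r, 1 ≤ r → r ≤ 7 → aseq r = low5 r := by
  intro r h1 h7
  interval_cases r <;> simp [aseq, low5, Nat.log2_def]

theorem Ufun_one (n : ℕ) (hn : 1 ≤ n) : Ufun n 1 = n := by
  have h : Nat.log2 1 = 0 := by decide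
  simp only [Ufun, h]
  norm_num [Nat.mod_one, aseq]
  omega

theorem Ufun_eq_low3 (n m : ℕ) (hn : 1 ≤ n) (h : Nat.log2 m = 1) : Ufun n m = low3 n := by
  simp only [Ufun, h]
  norm_num
  rw [aseq_eq _ (by omega) (by omega)]
  simp only [low5, low3]
  omega

theorem Ufun_eq_low5 (n m : ℕ) (hn : 1 ≤ n) (h : Nat.log2 m = 2) : Ufun n m = low5 n := by
  simp only [Ufun, h]
  norm_num
  rw [aseq_eq _ (by omega) (by omega)]
  simp only [low5]
  omega

/-- Theorem 6.1: for `m ≤ 5`, `μ(·,m) = U(·,m)`. -/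
theorem mu_eq_U_m_le_five (m : ℕ) (hm₁ : 1 ≤ m) (hm₅ : m ≤ 5) (n : ℕ) (hn : 1 ≤ n) :
    mu n m = Ufun n m := by
  rcases (by omega : m = 1 ∨ (2 ≤ m ∧ m ≤ 3) ∨ 4 ≤ m) with rfl | ⟨h2, h3⟩ | h4
  · rw [Ufun_one n hn]
    refine mu_eq_of_attains le_rfl ?_ fun W hW => low_le_Mfun no_minCex_one hW
    simpa using attains_one.mul n
  · have hlog : Nat.log2 m = 1 := by interval_cases m <;> decide
    rw [Ufun_eq_low3 n m hn hlog]
    exact mu_eq_of_attains h3 ((attains_low3 n).mono h2 le_rfl) fun W hW =>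
      low_le_Mfun no_minCex_three hW
  · have hlog : Nat.log2 m = 2 := by interval_cases m <;> decide
    rw [Ufun_eq_low5 n m hn hlog]
    exact mu_eq_of_attains hm₅ ((attains_low5 n).mono h4 le_rfl) fun W hW =>
      low_le_Mfun no_minCex_five hW
end

section
/- Let n, m, m' be positive integers with m ≤ n. Then μ(n·m', m·m') ≤ m'·μ(n, m) and μ*(n·m', m·m') ≤ m'·μ*(n, m). -/
/-!
Replace every entry of `W` by a constant `m' × m'` block, i.e. pass to `W ⊗ J` with `J` the
all-ones matrix. The diagonal stays equal to 1 and column weights are multiplied by `m'`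
(`hammingNorm_blowup_col`). The image of `x` under `W ⊗ J` is the image under `W` of the vector of
block sums of `x`, with each entry repeated `m'` times (`blowup_mulVec`), so
`M(W ⊗ J, 0) ≤ m' · M(W, 0)` (`Mfun_blowup_le`). Applying this to a `W` attaining the minimum gives
both inequalities; a minimizer exists because the matrix sets are nonempty (`AstarSet_nonempty`).
-/

open Matrix

/-- Repeating every entry of a vector `m'` times multiplies its Hamming weight by `m'`. -/
lemma hammingNorm_comp_divNat {n m' : ℕ} (f : Fin n → ZMod 2) :
    hammingNorm (fun i : Fin (n * m') => f i.divNat) = hammingNorm f * m' := by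
  unfold hammingNorm
  rw [Finset.card_equiv (t := (Finset.univ.filter fun i => f i ≠ 0) ×ˢ
    (Finset.univ : Finset (Fin m'))) finProdFinEquiv.symm]
  · simp
  · intro i
    simp [finProdFinEquiv]

/-- The blow-up `W ⊗ J` of `W`, where `J` is the all-ones `m' × m'` matrix: every entry of `W` is
replaced by a constant `m' × m'` block. -/
def blowup {n : ℕ} (m' : ℕ) (W : Matrix (Fin n) (Fin n) (ZMod 2)) :
    Matrix (Fin (n * m')) (Fin (n * m')) (ZMod 2) :=
  W.submatrix Fin.divNat Fin.divNat

/-- The blow-up acts on `x` as `W` acts on the vector of block sums of `x`, each entry of the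
result being repeated `m'` times. -/
lemma blowup_mulVec {n m' : ℕ} (W : Matrix (Fin n) (Fin n) (ZMod 2))
    (x : Fin (n * m') → ZMod 2) :
    (blowup m' W).mulVec x =
      fun i => W.mulVec (fun j => ∑ k : Fin m', x (finProdFinEquiv (j, k))) i.divNat := by
  funext i
  simp only [Matrix.mulVec, dotProduct, blowup, Matrix.submatrix_apply]
  rw [← finProdFinEquiv.sum_comp, Fintype.sum_prod_type]
  refine Finset.sum_congr rfl fun j _ => ?_
  rw [Finset.mul_sum]
  refine Finset.sum_congr rfl fun k _ => ?_
  have h : (finProdFinEquiv (j, k)).divNat = j :=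
    congrArg Prod.fst (finProdFinEquiv.symm_apply_apply (j, k))
  rw [h]

lemma Mfun_blowup_le {n : ℕ} (m' : ℕ) (W : Matrix (Fin n) (Fin n) (ZMod 2)) :
    Mfun (blowup m' W) 0 ≤ m' * Mfun W 0 := by
  refine Finset.sup_le fun x _ => ?_
  rw [add_zero, blowup_mulVec, hammingNorm_comp_divNat, mul_comm]
  refine Nat.mul_le_mul_left _ ?_
  have h := Finset.le_sup (f := fun y : Fin n → ZMod 2 => hammingNorm (W.mulVec y + 0))
    (Finset.mem_univ (fun j => ∑ k : Fin m', x (finProdFinEquiv (j, k))))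
  simpa only [Mfun, add_zero] using h

lemma hammingNorm_blowup_col {n m' : ℕ} (W : Matrix (Fin n) (Fin n) (ZMod 2))
    (j : Fin (n * m')) :
    hammingNorm (fun i => blowup m' W i j) = hammingNorm (fun i => W i j.divNat) * m' :=
  hammingNorm_comp_divNat fun i => W i j.divNat

/-- The infimum defining `muStar` ranges over a nonempty set when `1 ≤ m ≤ n`: take for the
support of column `j` any `m`-element set containing `j`. -/
lemma AstarSet_nonempty {n m : ℕ} (hm : 1 ≤ m) (hmn : m ≤ n) : (AstarSet n m).Nonempty := by
  have h : ∀ j : Fin n, ∃ s : Finset (Fin n), {j} ⊆ s ∧ s.card = m := fun j =>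
    Finset.exists_superset_card_eq (by simpa using hm) (by simpa using hmn)
  choose s hs hcard using h
  refine ⟨fun i j => if i ∈ s j then 1 else 0, fun i => ?_, fun j => ?_⟩
  · exact if_pos (hs i (Finset.mem_singleton_self i))
  · rw [← hcard j]
    simp [hammingNorm]

lemma AstarSet_subset_Aset (n m : ℕ) : AstarSet n m ⊆ Aset n m :=
  fun _ hW => ⟨hW.1, fun j => (hW.2 j).le⟩

/-- Lemma 3.1: for `m ≤ n`, `μ(nm', mm') ≤ m'·μ(n,m)` and `μ*(nm', mm') ≤ m'·μ*(n,m)`. -/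
theorem mu_reflect (n m m' : ℕ) (hn : 1 ≤ n) (hm : 1 ≤ m) (hm' : 1 ≤ m') (hmn : m ≤ n) :
    mu (n * m') (m * m') ≤ m' * mu n m ∧
    muStar (n * m') (m * m') ≤ m' * muStar n m := by
  have hne := AstarSet_nonempty hm hmn
  constructor
  · obtain ⟨W, hW, h⟩ := Nat.sInf_mem ((hne.mono (AstarSet_subset_Aset n m)).image
      fun W => Mfun W 0)
    rw [show mu n m = Mfun W 0 from h.symm]
    have hW' : blowup m' W ∈ Aset (n * m') (m * m') := by
      refine ⟨fun i => hW.1 _, fun j => ?_⟩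
      rw [hammingNorm_blowup_col]
      exact Nat.mul_le_mul_right _ (hW.2 _)
    exact (Nat.sInf_le (Set.mem_image_of_mem _ hW')).trans (Mfun_blowup_le m' W)
  · obtain ⟨W, hW, h⟩ := Nat.sInf_mem (hne.image fun W => Mfun W 0)
    rw [show muStar n m = Mfun W 0 from h.symm]
    have hW' : blowup m' W ∈ AstarSet (n * m') (m * m') := by
      refine ⟨fun i => hW.1 _, fun j => ?_⟩
      rw [hammingNorm_blowup_col, hW.2]
    exact (Nat.sInf_le (Set.mem_image_of_mem _ hW')).trans (Mfun_blowup_le m' W)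
end

section
/- Let n, N, M be positive integers. Then the following are equivalent: (1) there exist vectors a₁, …, aₙ ∈ 𝔽₂^N such that |λ₁a₁ + ⋯ + λₙaₙ| = M for every nonzero vector λ = (λ₁,…,λₙ) ∈ 𝔽₂ⁿ; (2) 2^{n−1} divides M and N ≥ (2ⁿ − 1)·M/2^{n−1}. -/
/-!
Write the vectors `a₁, …, aₙ` as the rows of an `n × N` matrix. The `i`-th coordinate of `∑ λⱼaⱼ` is
the dot product of `λ` with the `i`-th column, so everything rests on one fact
(`card_dotProduct_ne_zero`): a nonzero vector of `𝔽₂ⁿ` has nonzero dot product with exactly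
`2^{n-1}` vectors.

* Necessity: counting the pairs `(λ, i)` with `(∑ λⱼaⱼ)ᵢ ≠ 0` in two ways gives
  `(2ⁿ - 1) M = 2^{n-1} K`, where `K ≤ N` is the number of nonzero columns. As `2ⁿ - 1` is coprime
  to `2^{n-1}`, the latter divides `M`, and `K = (2ⁿ - 1) M / 2^{n-1}`.
* Sufficiency: take as columns `M / 2^{n-1}` copies of each nonzero vector of `𝔽₂ⁿ` (a replicated
  simplex code), padded with zero columns.
-/

open Matrix

/-- A nonzero linear form on `𝔽₂ⁿ` is nonzero at exactly half of the points: if `v i ≠ 0`, then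
translation by the `i`-th basis vector exchanges the points where it vanishes with those where it
does not. -/
theorem card_dotProduct_ne_zero {n : ℕ} (v : Fin n → ZMod 2) (hv : v ≠ 0) :
    (Finset.univ.filter fun c : Fin n → ZMod 2 => v ⬝ᵥ c ≠ 0).card = 2 ^ (n - 1) := by
  obtain ⟨i, hi⟩ := Function.ne_iff.mp hv
  have hn : 0 < n := i.pos
  have hi1 : v i = 1 := by
    exact Fin.eq_one_of_ne_zero (v i) hi
  have key : (Finset.univ.filter fun c : Fin n → ZMod 2 => v ⬝ᵥ c ≠ 0).card =
      (Finset.univ.filter fun c : Fin n → ZMod 2 => ¬ v ⬝ᵥ c ≠ 0).card := by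
    refine Finset.card_equiv (Equiv.addRight (Pi.single i 1)) fun c => ?_
    simp only [Finset.mem_filter, Finset.mem_univ, true_and, Equiv.coe_addRight, dotProduct_add,
      dotProduct_single, hi1, mul_one]
    generalize v ⬝ᵥ c = x
    revert x
    decide
  have tot := Finset.card_filter_add_card_filter_not (s := Finset.univ)
    (fun c : Fin n → ZMod 2 => v ⬝ᵥ c ≠ 0)
  rw [← key, Finset.card_univ, Fintype.card_fun, ZMod.card, Fintype.card_fin] at tot
  obtain ⟨m, rfl⟩ : ∃ m, n = m + 1 := ⟨n - 1, by omega⟩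
  rw [pow_succ] at tot
  simp only [Nat.add_sub_cancel]
  omega

/-- The weight of `∑ λⱼaⱼ` counts the columns of `a` not orthogonal to `λ`. -/
theorem hammingNorm_sum_smul {n N : ℕ} (a : Fin n → Fin N → ZMod 2) (lam : Fin n → ZMod 2) :
    hammingNorm (∑ j : Fin n, lam j • a j) =
      (Finset.univ.filter fun i => lam ⬝ᵥ (fun j => a j i) ≠ 0).card := by
  simp [hammingNorm, dotProduct]

theorem card_ne_zero_vectors (n : ℕ) :
    (Finset.univ.filter fun c : Fin n → ZMod 2 => c ≠ 0).card = 2 ^ n - 1 := by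
  rw [Finset.filter_ne', Finset.card_erase_of_mem (Finset.mem_univ _)]
  simp

/-- Double count of the pairs `(λ, i)` with `(∑ λⱼaⱼ)ᵢ ≠ 0`. -/
theorem double_count {n N M : ℕ} (a : Fin n → Fin N → ZMod 2)
    (ha : ∀ lam : Fin n → ZMod 2, lam ≠ 0 → hammingNorm (∑ j : Fin n, lam j • a j) = M) :
    (2 ^ n - 1) * M =
      (Finset.univ.filter fun i : Fin N => (fun j => a j i) ≠ 0).card * 2 ^ (n - 1) := by
  have h := Finset.sum_card_bipartiteAbove_eq_sum_card_bipartiteBelow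
    (s := (Finset.univ : Finset (Fin n → ZMod 2))) (t := (Finset.univ : Finset (Fin N)))
    (fun lam i => lam ⬝ᵥ (fun j => a j i) ≠ 0)
  simp only [Finset.bipartiteAbove, Finset.bipartiteBelow, ← hammingNorm_sum_smul] at h
  have hl : ∀ lam : Fin n → ZMod 2,
      hammingNorm (∑ j : Fin n, lam j • a j) = if lam ≠ 0 then M else 0 := by
    intro lam
    split_ifs with h0
    · exact ha lam h0
    · simp [not_not.mp h0]
  have hr : ∀ i : Fin N,
      (Finset.univ.filter fun lam : Fin n → ZMod 2 => lam ⬝ᵥ (fun j => a j i) ≠ 0).card =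
        if (fun j => a j i) ≠ 0 then 2 ^ (n - 1) else 0 := by
    intro i
    split_ifs with h0
    · simp_rw [dotProduct_comm _ (fun j => a j i)]
      exact card_dotProduct_ne_zero _ h0
    · simp [not_not.mp h0]
  simp_rw [hl, hr] at h
  rwa [← Finset.sum_filter, ← Finset.sum_filter, Finset.sum_const, Finset.sum_const,
    card_ne_zero_vectors, smul_eq_mul, smul_eq_mul] at h

/-- The replicated simplex code: `k` copies of each nonzero column, then zero columns. -/
theorem exists_constant_weight {n N k : ℕ} (h : (2 ^ n - 1) * k ≤ N) :
    ∃ a : Fin n → Fin N → ZMod 2, ∀ lam : Fin n → ZMod 2, lam ≠ 0 →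
      hammingNorm (∑ j : Fin n, lam j • a j) = 2 ^ (n - 1) * k := by
  obtain ⟨e⟩ : Nonempty ({c : Fin n → ZMod 2 // c ≠ 0} × Fin k ↪ Fin N) := by
    apply Function.Embedding.nonempty_of_card_le
    rw [Fintype.card_prod, Fintype.card_subtype, card_ne_zero_vectors]
    simpa using h
  let col : Fin N → Fin n → ZMod 2 := Function.extend e (fun p => p.1.1) 0
  refine ⟨fun j i => col i j, fun lam hlam => ?_⟩
  rw [hammingNorm_sum_smul, ← card_dotProduct_ne_zero lam hlam]
  have hk : k = (Finset.univ : Finset (Fin k)).card := by simp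
  conv_rhs => rw [hk, ← Finset.card_product]
  symm
  refine Finset.card_bij
    (fun p hp => e (⟨p.1, fun h0 => by simp [h0] at hp⟩, p.2)) ?_ ?_ ?_
  · intro p hp
    simpa [col, e.injective.extend_apply] using hp
  · intro p _ q _ hpq
    have := e.injective hpq
    simpa [Prod.ext_iff] using this
  · intro i hi
    by_cases hx : ∃ p, e p = i
    · obtain ⟨p, rfl⟩ := hx
      refine ⟨(p.1.1, p.2), ?_, rfl⟩
      simpa [col, e.injective.extend_apply] using hi
    · simp only [col, Finset.mem_filter, Function.extend_apply' _ _ _ hx] at hi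
      exact absurd (dotProduct_zero lam) hi.2

/-- Lemma 5.3 (equivalence): there exist `a₁, …, aₙ ∈ 𝔽₂^N` with `|∑ λⱼaⱼ| = M` for all
nonzero `λ ∈ 𝔽₂ⁿ` iff `2^{n−1} ∣ M` and `N ≥ (2ⁿ−1)·M/2^{n−1}`. -/
theorem switches_iff (n N M : ℕ) (hn : 1 ≤ n) (hN : 1 ≤ N) (hM : 1 ≤ M) :
    (∃ a : Fin n → Fin N → ZMod 2,
      ∀ lam : Fin n → ZMod 2, lam ≠ 0 →
        hammingNorm (∑ j : Fin n, lam j • a j) = M) ↔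
    (2 ^ (n - 1) ∣ M ∧ (2 ^ n - 1) * (M / 2 ^ (n - 1)) ≤ N) := by
  constructor
  · rintro ⟨a, ha⟩
    have h := double_count a ha
    have hcop : Nat.Coprime (2 ^ (n - 1)) (2 ^ n - 1) := by
      apply Nat.Coprime.pow_left
      rw [Nat.coprime_two_left]
      exact Nat.Even.sub_odd Nat.one_le_two_pow
        (even_two.pow_of_ne_zero (by omega)) odd_one
    have hdvd : 2 ^ (n - 1) ∣ M := hcop.dvd_of_dvd_mul_left (h ▸ Dvd.intro_left _ rfl)
    refine ⟨hdvd, ?_⟩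
    rw [← Nat.mul_div_assoc _ hdvd, h, Nat.mul_div_cancel _ (by positivity)]
    simpa using Finset.card_le_univ (Finset.univ.filter fun i : Fin N => (fun j => a j i) ≠ 0)
  · rintro ⟨hdvd, h⟩
    obtain ⟨a, ha⟩ := exists_constant_weight h
    exact ⟨a, fun lam hlam => (ha lam hlam).trans (Nat.mul_div_cancel' hdvd)⟩
end

section
/- Let n, N, M be positive integers and suppose a₁, …, aₙ ∈ 𝔽₂^N satisfy |λ₁a₁ + ⋯ + λₙaₙ| = M for every nonzero vector λ = (λ₁,…,λₙ) ∈ 𝔽₂ⁿ. Then 2^{n−1} divides M, and for every nonzero u = (u₁,…,uₙ) ∈ 𝔽₂ⁿ, the number of coordinate indices i ∈ {1,…,N} such that the i-th coordinate of aⱼ equals uⱼ for all j ∈ {1,…,n} is exactly M/2^{n−1}. -/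
/-!
Character sums on `𝔽₂ⁿ`. Write `χ(x) = (-1)^x` and let `vᵢ ∈ 𝔽₂ⁿ` be the `i`-th coordinates of
`a₁, …, aₙ`, so that `2 |∑ λⱼ aⱼ| = ∑ᵢ (1 - χ(λ ⬝ vᵢ))`. For nonzero `u`, evaluate
`∑_λ χ(λ ⬝ u) · 2 |∑ λⱼ aⱼ|` in two ways. The weight is `M` except at `λ = 0`, where it vanishes, so
orthogonality (`sum_sgn_dot`) gives `-2M`. Exchanging the sums, each `i` contributes
`∑_λ χ(λ ⬝ u) - ∑_λ χ(λ ⬝ (u + vᵢ))`, which is `-2ⁿ` if `vᵢ = u` and `0` otherwise. Hence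
`M = 2^(n-1) · #{i | vᵢ = u}`, and both claims follow since a nonzero `u` exists for `n ≥ 1`.
-/

open Matrix

/-- The nontrivial additive character `x ↦ (-1)^x` of `𝔽₂`, with integer values. -/
def sgn (x : ZMod 2) : ℤ := if x = 0 then 1 else -1

lemma sgn_add (x y : ZMod 2) : sgn (x + y) = sgn x * sgn y := by
  revert x y; decide

/-- Orthogonality of characters of `𝔽₂ⁿ`. -/
lemma sum_sgn_dot {n : ℕ} (v : Fin n → ZMod 2) :
    ∑ lam : Fin n → ZMod 2, sgn (lam ⬝ᵥ v) = if v = 0 then 2 ^ n else 0 := by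
  split_ifs with hv
  · subst hv
    simp [sgn, ZMod.card]
  · obtain ⟨j, hj⟩ := Function.ne_iff.mp hv
    have hj1 : v j = 1 := (by decide : ∀ x : ZMod 2, x ≠ 0 → x = 1) _ hj
    -- Translation by the `j`-th basis vector permutes the summands and flips each sign.
    have key : ∑ lam : Fin n → ZMod 2, sgn (lam ⬝ᵥ v)
        = ∑ lam : Fin n → ZMod 2, -sgn (lam ⬝ᵥ v) := by
      refine (Fintype.sum_equiv (Equiv.addRight (Pi.single j (1 : ZMod 2))) _ _ fun lam => ?_).symm
      have h1 : sgn 1 = -1 := by decide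
      simp [add_dotProduct, sgn_add, hj1, h1]
    rw [Finset.sum_neg_distrib] at key
    linarith

lemma two_mul_hammingNorm {N : ℕ} (x : Fin N → ZMod 2) :
    2 * (hammingNorm x : ℤ) = ∑ i, (1 - sgn (x i)) := by
  rw [hammingNorm, Finset.card_filter]
  push_cast
  rw [Finset.mul_sum]
  refine Finset.sum_congr rfl fun i _ => ?_
  by_cases hx : x i = 0 <;> simp [sgn, hx]

lemma eq_two_pow_mul_card (n N M : ℕ) (hn : 1 ≤ n) (a : Fin n → Fin N → ZMod 2)
    (h : ∀ lam : Fin n → ZMod 2, lam ≠ 0 →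
      hammingNorm (∑ j : Fin n, lam j • a j) = M)
    (u : Fin n → ZMod 2) (hu : u ≠ 0) :
    M = 2 ^ (n - 1) *
      (Finset.univ.filter fun i : Fin N => ∀ j : Fin n, a j i = u j).card := by
  have hA : ∑ lam : Fin n → ZMod 2,
      sgn (lam ⬝ᵥ u) * (2 * (hammingNorm (∑ j, lam j • a j) : ℤ)) = -(2 * M) := by
    have h1 : ∀ lam : Fin n → ZMod 2,
        sgn (lam ⬝ᵥ u) * (2 * (hammingNorm (∑ j, lam j • a j) : ℤ))
          = 2 * M * sgn (lam ⬝ᵥ u) - if lam = 0 then 2 * (M : ℤ) else 0 := by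
      intro lam
      split_ifs with hl
      · subst hl
        simp [sgn]
      · rw [h lam hl]
        ring
    simp_rw [h1]
    rw [Finset.sum_sub_distrib, ← Finset.mul_sum, sum_sgn_dot]
    simp [hu]
  have hB : ∑ lam : Fin n → ZMod 2,
      sgn (lam ⬝ᵥ u) * (2 * (hammingNorm (∑ j, lam j • a j) : ℤ))
        = -(2 ^ n *
          ((Finset.univ.filter fun i : Fin N => ∀ j : Fin n, a j i = u j).card : ℤ)) := by
    simp_rw [two_mul_hammingNorm, Finset.mul_sum]
    rw [Finset.sum_comm, Finset.card_filter]
    push_cast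
    rw [Finset.mul_sum, ← Finset.sum_neg_distrib]
    refine Finset.sum_congr rfl fun i _ => ?_
    have h2 : ∀ lam : Fin n → ZMod 2,
        sgn (lam ⬝ᵥ u) * (1 - sgn ((∑ j, lam j • a j) i))
          = sgn (lam ⬝ᵥ u) - sgn (lam ⬝ᵥ (u + fun j => a j i)) := by
      intro lam
      have h3 : (∑ j, lam j • a j) i = lam ⬝ᵥ fun j => a j i := by
        simp [dotProduct]
      rw [h3, dotProduct_add, sgn_add]
      ring
    simp_rw [h2]
    rw [Finset.sum_sub_distrib, sum_sgn_dot, sum_sgn_dot, if_neg hu]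
    -- In characteristic two, `u + v = 0` says `v = u`.
    have h4 : (u + fun j => a j i) = 0 ↔ ∀ j, a j i = u j := by
      rw [funext_iff]
      refine forall_congr' fun j => ?_
      exact (by decide : ∀ x y : ZMod 2, x + y = 0 ↔ y = x) (u j) (a j i)
    simp only [h4]
    split_ifs <;> simp
  obtain ⟨m, rfl⟩ := Nat.exists_eq_add_of_le' hn
  have := hA.symm.trans hB
  rw [pow_succ] at this
  zify
  simp only [Nat.add_sub_cancel]
  linarith

/-- Lemma 5.3 (uniqueness part): if `|∑ λⱼaⱼ| = M` for every nonzero `λ ∈ 𝔽₂ⁿ`, then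
`2^{n−1} ∣ M` and for every nonzero `u ∈ 𝔽₂ⁿ` the number of coordinates `i` at which
`aⱼ` has `i`-th coordinate `uⱼ` for all `j` is exactly `M/2^{n−1}`. -/
theorem switches_count (n N M : ℕ) (hn : 1 ≤ n) (hN : 1 ≤ N) (hM : 1 ≤ M)
    (a : Fin n → Fin N → ZMod 2)
    (h : ∀ lam : Fin n → ZMod 2, lam ≠ 0 →
      hammingNorm (∑ j : Fin n, lam j • a j) = M) :
    2 ^ (n - 1) ∣ M ∧
    ∀ u : Fin n → ZMod 2, u ≠ 0 →
      (Finset.univ.filter fun i : Fin N => ∀ j : Fin n, a j i = u j).card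
        = M / 2 ^ (n - 1) := by
  have key := eq_two_pow_mul_card n N M hn a h
  refine ⟨?_, fun u hu => ?_⟩
  · have hone : (fun _ => 1 : Fin n → ZMod 2) ≠ 0 :=
      fun h0 => one_ne_zero (congrFun h0 ⟨0, hn⟩)
    exact Dvd.intro _ (key _ hone).symm
  · exact (Nat.div_eq_of_eq_mul_right (by positivity) (key u hu)).symm
end

section
/- Let n be a positive integer, let W be an n×n matrix over 𝔽₂ with all diagonal entries equal to 1, and let c ∈ 𝔽₂ⁿ. Then the sum over all x ∈ 𝔽₂ⁿ of |Wx + c| equals n·2^{n−1} (i.e., the mean value of |Wx + c| over all x ∈ 𝔽₂ⁿ is n/2). Consequently 2·M(W,c) ≥ n, and moreover 2·M(W,c) > n whenever the Hamming weight of c is not equal to n/2. -/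
/-!
Since `W i i = 1`, the translation `x ↦ x + eᵢ` flips the `i`-th coordinate of `W x + c`, so that
coordinate is nonzero for exactly half of the `x` (`two_mul_sum_coord`). Summing over `i` gives
`2 · ∑ |W x + c| = n · 2ⁿ` (`two_mul_sum_hammingNorm`), i.e. the mean of `2 |W x + c|` is `n`.
The maximum is at least the mean, and if it equals the mean then `|W x + c|` is constant in `x`;
its value at `x = 0` is `|c|`, which forces `2 |c| = n`.
-/

open Matrix

theorem two_mul_sum_coord {n : ℕ} (W : Matrix (Fin n) (Fin n) (ZMod 2))
    (c : Fin n → ZMod 2) (i : Fin n) (hi : W i i = 1) :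
    2 * (∑ x : Fin n → ZMod 2, if (W.mulVec x + c) i ≠ 0 then 1 else 0) = 2 ^ n := by
  -- Reindex one of the two copies of the sum by `x ↦ x + eᵢ` and add termwise.
  have h := Equiv.sum_comp (Equiv.addRight (Pi.single i (1 : ZMod 2) : Fin n → ZMod 2))
    (fun x : Fin n → ZMod 2 => if (W.mulVec x + c) i ≠ 0 then 1 else 0)
  rw [two_mul]
  nth_rewrite 1 [← h]
  rw [← Finset.sum_add_distrib]
  have key : ∀ a : ZMod 2,
      (if a + 1 ≠ 0 then 1 else 0) + (if a ≠ 0 then 1 else 0) = 1 := by decide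
  have flip : ∀ x : Fin n → ZMod 2,
      (W.mulVec (x + Pi.single i 1) + c) i = (W.mulVec x + c) i + 1 := by
    intro x
    simp only [Matrix.mulVec_add, Pi.add_apply, Matrix.mulVec_single_one, Matrix.col_apply, hi]
    ring
  simp only [Equiv.coe_addRight, flip, key]
  simp [ZMod.card]

theorem two_mul_sum_hammingNorm {n : ℕ} (W : Matrix (Fin n) (Fin n) (ZMod 2))
    (hW : ∀ i, W i i = 1) (c : Fin n → ZMod 2) :
    2 * (∑ x : Fin n → ZMod 2, hammingNorm (W.mulVec x + c)) = n * 2 ^ n := by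
  simp only [hammingNorm, Finset.card_filter]
  rw [Finset.sum_comm, Finset.mul_sum,
    Finset.sum_congr rfl fun i _ => two_mul_sum_coord W c i (hW i)]
  simp

/-- Lemma 2.4 (mean value): for any admissible wiring `W` and state `c`, the sum of
`|Wx + c|` over all `x ∈ 𝔽₂ⁿ` is `n·2^{n−1}` (i.e. the mean is `n/2`); hence
`M(W,c) ≥ n/2`, with strict inequality when the weight of `c` is not `n/2`. -/
theorem mean_value (n : ℕ) (hn : 1 ≤ n) (W : Matrix (Fin n) (Fin n) (ZMod 2))
    (hW : ∀ i, W i i = 1) (c : Fin n → ZMod 2) :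
    (∑ x : Fin n → ZMod 2, hammingNorm (W.mulVec x + c)) = n * 2 ^ (n - 1) ∧
    n ≤ 2 * Mfun W c ∧
    (2 * hammingNorm c ≠ n → n < 2 * Mfun W c) := by
  have hsum := two_mul_sum_hammingNorm W hW c
  have hle : ∀ x : Fin n → ZMod 2, hammingNorm (W.mulVec x + c) ≤ Mfun W c := fun x =>
    Finset.le_sup (f := fun x : Fin n → ZMod 2 => hammingNorm (W.mulVec x + c))
      (Finset.mem_univ x)
  have hmean : ∑ x : Fin n → ZMod 2, 2 * hammingNorm (W.mulVec x + c)
      = ∑ _x : Fin n → ZMod 2, n := by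
    rw [← Finset.mul_sum, hsum]
    simp [ZMod.card, mul_comm]
  -- No slack below the mean: if `2 M ≤ n` then every term of the sum equals `n`.
  have hconst : 2 * Mfun W c ≤ n →
      ∀ x : Fin n → ZMod 2, 2 * hammingNorm (W.mulVec x + c) = n := fun h x =>
    (Finset.sum_eq_sum_iff_of_le fun y _ =>
      (Nat.mul_le_mul_left 2 (hle y)).trans h).1 hmean x (Finset.mem_univ x)
  refine ⟨?_, ?_, fun hc => ?_⟩
  · obtain ⟨k, rfl⟩ : ∃ k, n = k + 1 := ⟨n - 1, by omega⟩
    rw [pow_succ] at hsum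
    rw [Nat.add_sub_cancel]
    linarith
  · by_contra! h
    have h0 := hconst h.le 0
    have h1 := hle 0
    omega
  · by_contra! h
    exact hc (by simpa using hconst h 0)
end

section
/- The sequence a satisfies the meta-Fibonacci recurrence: a(1) = 1, a(2) = 2, and a(n) = a(n − a(n−1)) + a(n − 1 − a(n−2)) for all integers n ≥ 3. -/
/-!
For `p = 2^k`, the integers `n ≥ 1` split into the blocks `2p - 1 ≤ n ≤ 4p - 2`, and on each block
`a(2p - 1 + i) = p + a(i)` holds uniformly for `0 ≤ i ≤ 2p - 1`, using `a(0) = 0`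
(`aseq_block`). In particular `a(2p - 1) = p`, and `a(4p - 2) = 2p` at the end of the block.

The recurrence follows by strong induction. Let `n = 2p - 1 + i` with `i ≥ 3` and `p = 2q`. Then
`n - a(n-1) = (2q - 1) + (i - a(i-1))` and `n - 1 - a(n-2) = (2q - 1) + (i - 1 - a(i-2))`. Both
lie in the block of `q`, so the two terms add up to
`q + a(i - a(i-1)) + q + a(i - 1 - a(i-2)) = p + a(i) = a(n)`. That they do not leave the block,
that is, `i - a(i-1) ≤ p - 1`, holds because `a` grows by at most one at each step and
`a(2p - 2) = p`. The cases `i ≤ 2` are computed directly.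
-/

open Matrix

lemma aseq_zero : aseq 0 = 0 := by simp [aseq]

lemma aseq_one : aseq 1 = 1 := by simp [aseq]

lemma aseq_last (k : ℕ) : aseq (2 * 2 ^ k - 1) = 2 ^ k := by
  rcases k with _ | k
  · simp [aseq_one]
  · have hp : 0 < 2 ^ k := by positivity
    obtain ⟨m, hm⟩ : ∃ m, 2 * 2 ^ (k + 1) - 1 = m + 2 :=
      ⟨2 * 2 ^ (k + 1) - 3, by rw [pow_succ]; omega⟩
    have hl : Nat.log2 (m + 2) = k + 1 := by
      rw [Nat.log2_eq_iff (by omega)]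
      rw [← hm]; simp only [pow_succ]; omega
    rw [hm, aseq, hl, if_pos]
    rw [← hm, pow_succ 2 (k + 1)]; omega

/-- The block formula. At `i = 0` it encodes the value `a(2^(k+1) - 1) = 2^k`. -/
lemma aseq_block (k i : ℕ) (hi : i ≤ 2 * 2 ^ k - 1) :
    aseq (2 * 2 ^ k - 1 + i) = 2 ^ k + aseq i := by
  have hp : 0 < 2 ^ k := by positivity
  rcases Nat.eq_zero_or_pos i with rfl | h0
  · simp [aseq_zero, aseq_last]
  · obtain ⟨m, hm⟩ : ∃ m, 2 * 2 ^ k - 1 + i = m + 2 := ⟨2 * 2 ^ k - 1 + i - 2, by omega⟩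
    have hl : Nat.log2 (m + 2) = k + 1 := by
      rw [Nat.log2_eq_iff (by omega)]
      rw [← hm]; simp only [pow_succ]; omega
    rw [hm, aseq, hl, if_neg]
    · have : m + 2 - (2 ^ (k + 1) - 1) = i := by rw [pow_succ]; omega
      rw [this]; simp
    · rw [← hm]; simp only [pow_succ]; omega

/-- Also valid for `k = 0`, where it reads `a(2) = 2`. -/
lemma aseq_block_end (k : ℕ) : aseq (4 * 2 ^ k - 2) = 2 * 2 ^ k := by
  have hp : 0 < 2 ^ k := by positivity
  have h := aseq_block k (2 * 2 ^ k - 1) le_rfl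
  rw [aseq_last, show 2 * 2 ^ k - 1 + (2 * 2 ^ k - 1) = 4 * 2 ^ k - 2 by omega] at h
  omega

lemma exists_block (n : ℕ) (hn : 1 ≤ n) :
    ∃ k i, i ≤ 2 * 2 ^ k - 1 ∧ n = 2 * 2 ^ k - 1 + i := by
  have h1 : 2 ^ Nat.log 2 (n + 1) ≤ n + 1 := Nat.pow_log_le_self 2 (by omega)
  have h2 : n + 1 < 2 ^ (Nat.log 2 (n + 1) + 1) := Nat.lt_pow_succ_log_self (by norm_num) _
  rcases h : Nat.log 2 (n + 1) with _ | k
  · rw [h] at h2; omega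
  · rw [h] at h1 h2
    simp only [pow_succ] at h1 h2
    exact ⟨k, n - (2 * 2 ^ k - 1), by omega, by omega⟩

lemma aseq_succ_le (n : ℕ) : aseq (n + 1) ≤ aseq n + 1 := by
  induction n using Nat.strong_induction_on with
  | _ n ih =>
    rcases Nat.eq_zero_or_pos n with rfl | h0
    · simp [aseq_one]
    obtain ⟨k, i, hi, rfl⟩ := exists_block n h0
    have hp : 0 < 2 ^ k := by positivity
    rw [aseq_block k i hi]
    rcases hi.eq_or_lt with rfl | hlt
    · have h := aseq_last (k + 1)
      rw [pow_succ, show 2 * (2 ^ k * 2) - 1 = 2 * 2 ^ k - 1 + (2 * 2 ^ k - 1) + 1 by omega] at h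
      rw [h, aseq_last]; omega
    · rw [add_assoc, aseq_block k (i + 1) hlt]
      have := ih i (by omega)
      omega

lemma aseq_add_le (n d : ℕ) : aseq (n + d) ≤ aseq n + d := by
  induction d with
  | zero => simp
  | succ d ih => have := aseq_succ_le (n + d); rw [← add_assoc]; omega

lemma aseq_le (n : ℕ) : aseq n ≤ n := by
  simpa [aseq_zero] using aseq_add_le 0 n

/-- For `p = 2^(k+1)` and `j ≤ 2p - 2` this says `j + 1 - a(j) ≤ p - 1`, which keeps the arguments
of the recurrence inside the preceding block. -/
lemma add_two_le (k j : ℕ) (hj : j ≤ 4 * 2 ^ k - 2) : j + 2 ≤ 2 * 2 ^ k + aseq j := by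
  have hp : 0 < 2 ^ k := by positivity
  have h := aseq_add_le j (4 * 2 ^ k - 2 - j)
  rw [Nat.add_sub_cancel' hj, aseq_block_end] at h
  omega

lemma aseq_rec (n : ℕ) (hn : 3 ≤ n) :
    aseq n = aseq (n - aseq (n - 1)) + aseq (n - 1 - aseq (n - 2)) := by
  induction n using Nat.strong_induction_on with
  | _ n ih =>
    obtain ⟨k', i, hi, rfl⟩ := exists_block n (by omega)
    rcases k' with _ | k
    · simp only [pow_zero] at hi hn; omega
    have hq : 0 < 2 ^ k := by positivity
    have hpq : 2 * 2 ^ (k + 1) = 4 * 2 ^ k := by rw [pow_succ]; ring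
    have hB := aseq_block (k + 1)
    rw [hpq] at hi hn ih hB ⊢
    rw [pow_succ] at hB
    have hE := aseq_block_end k
    have hb := aseq_block k
    rw [hB i hi]
    obtain rfl | rfl | rfl | h3 : i = 0 ∨ i = 1 ∨ i = 2 ∨ 3 ≤ i := by omega
    · rcases k with _ | k
      · have h2 : aseq 2 = 2 := by simpa using hE
        simp [h2, aseq_one, aseq_zero]
      -- Here `n - 2` is the last but one element of its block, where `a` is already `2 * 2 ^ k`.
      have hr : 0 < 2 ^ k := by positivity
      have hE' := aseq_block_end k
      have hs : 4 * 2 ^ k = 2 * 2 ^ (k + 1) := by rw [pow_succ]; ring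
      have h2 := hb (2 * 2 ^ (k + 1) - 2) (by omega)
      rw [hs] at hE'
      have e1 : 4 * 2 ^ (k + 1) - 1 + 0 - 1 = 4 * 2 ^ (k + 1) - 2 := by omega
      have e2 : 4 * 2 ^ (k + 1) - 1 + 0 - 2 =
        2 * 2 ^ (k + 1) - 1 + (2 * 2 ^ (k + 1) - 2) := by omega
      rw [e1, hE, e2, h2, hE',
        show 4 * 2 ^ (k + 1) - 1 + 0 - 2 * 2 ^ (k + 1) = 2 * 2 ^ (k + 1) - 1 by omega,
        show 4 * 2 ^ (k + 1) - 2 - (2 ^ (k + 1) + 2 * 2 ^ k) = 2 * 2 ^ (k + 1) - 2 by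
          simp only [pow_succ] at *; omega,
        aseq_last, hE', aseq_zero]
      simp only [pow_succ]; omega
    · have h0 := hB 0 (by omega)
      rw [show 4 * 2 ^ k - 1 + 1 - 1 = 4 * 2 ^ k - 1 + 0 by omega, h0,
        show 4 * 2 ^ k - 1 + 1 - 2 = 4 * 2 ^ k - 2 by omega, hE, aseq_zero,
        show 4 * 2 ^ k - 1 + 1 - (2 ^ k * 2 + 0) = 2 * 2 ^ k - 1 + 1 by omega,
        show 4 * 2 ^ k - 1 + 0 - 2 * 2 ^ k = 2 * 2 ^ k - 1 by omega,
        hb 1 (by omega), aseq_last]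
      omega
    · have h2 : aseq 2 = 2 := by simpa using aseq_block_end 0
      rw [show 4 * 2 ^ k - 1 + 2 - 1 = 4 * 2 ^ k - 1 + 1 by omega, hB 1 (by omega),
        show 4 * 2 ^ k - 1 + 2 - 2 = 4 * 2 ^ k - 1 + 0 by omega, hB 0 (by omega),
        aseq_zero, aseq_one, h2,
        show 4 * 2 ^ k - 1 + 2 - (2 ^ k * 2 + 1) = 2 * 2 ^ k - 1 + 1 by omega,
        show 4 * 2 ^ k - 1 + 1 - (2 ^ k * 2 + 0) = 2 * 2 ^ k - 1 + 1 by omega,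
        hb 1 (by omega), aseq_one]
      omega
    · have b1 := add_two_le k (i - 1) (by omega)
      have b2 := add_two_le k (i - 2) (by omega)
      have l1 := aseq_le (i - 1)
      have l2 := aseq_le (i - 2)
      rw [show 4 * 2 ^ k - 1 + i - 1 = 4 * 2 ^ k - 1 + (i - 1) by omega, hB (i - 1) (by omega),
        show 4 * 2 ^ k - 1 + i - 2 = 4 * 2 ^ k - 1 + (i - 2) by omega, hB (i - 2) (by omega),
        show 4 * 2 ^ k - 1 + i - (2 ^ k * 2 + aseq (i - 1)) =
          2 * 2 ^ k - 1 + (i - aseq (i - 1)) by omega,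
        show 4 * 2 ^ k - 1 + (i - 1) - (2 ^ k * 2 + aseq (i - 2)) =
          2 * 2 ^ k - 1 + (i - 1 - aseq (i - 2)) by omega,
        hb _ (by omega), hb _ (by omega), ih i (by omega) h3]
      omega

/-- The sequence `a` satisfies the meta-Fibonacci recurrence of OEIS A046699:
`a(1) = 1`, `a(2) = 2`, and `a(n) = a(n − a(n−1)) + a(n−1 − a(n−2))` for `n ≥ 3`. -/
theorem aseq_meta_fibonacci :
    aseq 1 = 1 ∧ aseq 2 = 2 ∧
    ∀ n : ℕ, 3 ≤ n → aseq n = aseq (n - aseq (n - 1)) + aseq (n - 1 - aseq (n - 2)) :=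
  ⟨aseq_one, by simpa using aseq_block_end 0, aseq_rec⟩
end

section
/- Let n and m be positive integers with m > 1. Then (a) ν(n) = ν(n, m) = ⌈n/2⌉; and (b) if n ≥ m, then ν*(n, m) = ν(n, m) + 1 if n is even and m is odd, and ν*(n, m) = ν(n, m) otherwise. -/
/-!
Lower bound: every row `i` of `W` is nonzero (its diagonal entry is 1), so flipping the `i`-th bit
of `x` flips the `i`-th bit of `W x + c`. Hence the average of `|W x + c|` over all `x` is exactly
`n / 2` (`two_mul_sum_norm`), which gives `n ≤ 2 M(W,c)`. If equality holds, all the weights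
`|W x + c|` coincide; comparing `x = 0` with `x = e_j` shows that every column of `W` has even
weight (`even_col_of_tight`). So for `n` even and all columns of odd weight `m`, the bound is at
least `n / 2 + 1`.

Upper bound: if rows `2k` and `2k+1` of `W` are equal and `c` is `0` and `1` there, then these two
rows contribute exactly one to every `|W x + c|`. A column is a union of `t` such row pairs together
with a prescribed pattern on the unpaired rows (`exists_col`), and:
* for `n ≡ m` mod 2, at most one row is left unpaired, giving `⌈n/2⌉`;
* for `n` even and `m` odd, two rows are left unpaired, giving `(n-2)/2 + 2`;
* for `n` odd and `m` even, three rows are left over. In all columns but the last, these rows carry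
  `(0,0,0)` or `(1,1,0)`, in the last column `(1,0,1)`, and `c` is `(0,1,1)` there. No `x` makes all
  three entries of `W x + c` equal to 1, so they contribute at most two.
The general case of (a) follows by using matrices with all columns of weight 2 (if `n ≥ 2`).
-/

open Matrix

/-! ### Weights of coordinates -/

/-- The weight (0 or 1) of one coordinate. -/
def bitWt (a : ZMod 2) : ℕ := if a = 0 then 0 else 1

lemma bitWt_le (a : ZMod 2) : bitWt a ≤ 1 := by unfold bitWt; split <;> omega

lemma bitWt_add_flip (a b : ZMod 2) (h : a + b = 1) : bitWt a + bitWt b = 1 := by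
  revert a b; decide

lemma bitWt_cast (a : ZMod 2) : ((bitWt a : ℕ) : ZMod 2) = a := by
  revert a; decide

lemma hammingNorm_eq_sum {n : ℕ} (u : Fin n → ZMod 2) : hammingNorm u = ∑ i, bitWt (u i) := by
  unfold hammingNorm bitWt
  rw [Finset.card_filter]
  exact Finset.sum_congr rfl fun i _ => by by_cases h : u i = 0 <;> simp [h]

lemma hammingNorm_eq_sum_range {n : ℕ} (u : ℕ → ZMod 2) :
    hammingNorm (fun i : Fin n => u i) = ∑ i ∈ Finset.range n, bitWt (u i) := by
  rw [hammingNorm_eq_sum, Fin.sum_univ_eq_sum_range (fun i => bitWt (u i))]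

lemma hammingNorm_cast {n : ℕ} (u : Fin n → ZMod 2) :
    ((hammingNorm u : ℕ) : ZMod 2) = ∑ i, u i := by
  rw [hammingNorm_eq_sum]
  push_cast
  exact Finset.sum_congr rfl fun i _ => bitWt_cast _

/-! ### Lower bounds -/

lemma norm_le_Mfun {n : ℕ} (W : Matrix (Fin n) (Fin n) (ZMod 2)) (c x : Fin n → ZMod 2) :
    hammingNorm (W.mulVec x + c) ≤ Mfun W c :=
  Finset.le_sup (f := fun x : Fin n → ZMod 2 => hammingNorm (W.mulVec x + c)) (Finset.mem_univ x)

/-- The average of `|W x + c|` over all `x` is `n / 2`. -/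
lemma two_mul_sum_norm {n : ℕ} (W : Matrix (Fin n) (Fin n) (ZMod 2)) (hW : ∀ i, W i i = 1)
    (c : Fin n → ZMod 2) :
    2 * ∑ x : Fin n → ZMod 2, hammingNorm (W.mulVec x + c) = n * 2 ^ n := by
  have row : ∀ i, 2 * ∑ x : Fin n → ZMod 2, bitWt ((W.mulVec x + c) i) = 2 ^ n := by
    intro i
    -- Translation by `e_i` permutes the vectors `x` and flips coordinate `i` of `W x + c`.
    have shift : ∑ x : Fin n → ZMod 2, bitWt ((W.mulVec (x + Pi.single i 1) + c) i)
        = ∑ x : Fin n → ZMod 2, bitWt ((W.mulVec x + c) i) :=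
      Equiv.sum_comp (Equiv.addRight (Pi.single i (1 : ZMod 2)))
        (fun x => bitWt ((W.mulVec x + c) i))
    rw [two_mul]
    nth_rewrite 2 [← shift]
    rw [← Finset.sum_add_distrib, Finset.sum_congr rfl (g := fun _ => 1)]
    · simp [ZMod.card]
    · intro x _
      apply bitWt_add_flip
      have e : (W.mulVec (x + Pi.single i 1)) i = W.mulVec x i + 1 := by
        rw [Matrix.mulVec_add, Pi.add_apply, Matrix.mulVec_single_one]
        simp [Matrix.col, hW]
      simp only [Pi.add_apply, e]
      generalize W.mulVec x i = a
      generalize c i = b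
      revert a b; decide
  simp only [hammingNorm_eq_sum]
  rw [Finset.sum_comm, Finset.mul_sum, Finset.sum_congr rfl (fun i _ => row i)]
  simp

lemma le_two_mul_Mfun {n : ℕ} (W : Matrix (Fin n) (Fin n) (ZMod 2)) (hW : ∀ i, W i i = 1)
    (c : Fin n → ZMod 2) : n ≤ 2 * Mfun W c := by
  have h := two_mul_sum_norm W hW c
  have h2 : ∑ x : Fin n → ZMod 2, hammingNorm (W.mulVec x + c) ≤ 2 ^ n * Mfun W c := by
    refine (Finset.sum_le_sum fun x _ => norm_le_Mfun W c x).trans ?_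
    simp [ZMod.card]
  have h3 : 0 < 2 ^ n := by positivity
  nlinarith

/-- If the averaging bound is attained, then all `|W x + c|` agree, so all columns are even. -/
lemma even_col_of_tight {n : ℕ} (W : Matrix (Fin n) (Fin n) (ZMod 2)) (hW : ∀ i, W i i = 1)
    (c : Fin n → ZMod 2) (h : n = 2 * Mfun W c) (j : Fin n) :
    Even (hammingNorm fun i => W i j) := by
  have hs := two_mul_sum_norm W hW c
  have hsum : ∑ x : Fin n → ZMod 2, hammingNorm (W.mulVec x + c)
      = ∑ _x : Fin n → ZMod 2, Mfun W c := by
    have h1 : ∑ _x : Fin n → ZMod 2, Mfun W c = 2 ^ n * Mfun W c := by simp [ZMod.card]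
    have h2 : n * 2 ^ n = 2 * (2 ^ n * Mfun W c) := by
      nth_rewrite 1 [h]; ring
    omega
  have hall := (Finset.sum_eq_sum_iff_of_le fun x _ => norm_le_Mfun W c x).1 hsum
  have e0 := hall 0 (Finset.mem_univ _)
  have e1 := hall (Pi.single j 1) (Finset.mem_univ _)
  rw [← e0, Matrix.mulVec_zero, zero_add, Matrix.mulVec_single_one] at e1
  have e2 := congrArg (Nat.cast : ℕ → ZMod 2) e1
  rw [hammingNorm_cast, hammingNorm_cast] at e2
  simp only [Pi.add_apply, Finset.sum_add_distrib, add_eq_right] at e2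
  rw [← ZMod.natCast_eq_zero_iff_even, hammingNorm_cast]
  exact e2

/-! ### Constructions -/

lemma sum_range_pairs (f : ℕ → ℕ) (p : ℕ) :
    ∑ i ∈ Finset.range (2 * p), f i = ∑ k ∈ Finset.range p, (f (2 * k) + f (2 * k + 1)) := by
  induction p with
  | zero => simp
  | succ p ih =>
    rw [Nat.mul_succ, Finset.sum_range_succ, Finset.sum_range_succ, ih, Finset.sum_range_succ]
    ring

/-- There is a column that is constant on each of the first `p` row pairs, equal to 1 on exactly
`t` of them, among these the pairs in `K`, and that agrees with `E` on the rows from `2p` on. -/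
lemma exists_col (p r t : ℕ) (ht : t ≤ p) (E : ℕ → ZMod 2) (K : Finset ℕ)
    (hK : K ⊆ Finset.range p) (hKt : K.card ≤ t) :
    ∃ u : ℕ → ZMod 2, (∀ k < p, u (2 * k) = u (2 * k + 1)) ∧ (∀ i, u (2 * p + i) = E i) ∧
      (∀ i, i / 2 ∈ K → u i = 1) ∧
      ∑ i ∈ Finset.range (2 * p + r), bitWt (u i)
        = 2 * t + ∑ i ∈ Finset.range r, bitWt (E i) := by
  obtain ⟨T, hKT, hT, hc⟩ := Finset.exists_subsuperset_card_eq hK hKt (by simpa using ht)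
  have lt_of : ∀ k ∈ T, k < p := fun k hk => Finset.mem_range.1 (hT hk)
  refine ⟨fun i => if i < 2 * p then (if i / 2 ∈ T then 1 else 0) else E (i - 2 * p),
    ?_, ?_, ?_, ?_⟩
  · intro k hk
    have h1 : (2 * k + 1) / 2 = k := by omega
    have h2 : (2 * k) / 2 = k := by omega
    have h3 : 2 * k < 2 * p := by omega
    have h4 : 2 * k + 1 < 2 * p := by omega
    simp only [h1, h2, h3, h4, if_true]
  · intro i; simp
  · intro i hi
    have := lt_of _ (hKT hi)
    have h3 : i < 2 * p := by omega
    simp [h3, hKT hi]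
  · rw [Finset.sum_range_add, sum_range_pairs]
    congr 1
    · have : ∀ k ∈ Finset.range p,
          (bitWt (if 2 * k < 2 * p then (if 2 * k / 2 ∈ T then 1 else 0) else E (2 * k - 2 * p))
          + bitWt (if 2 * k + 1 < 2 * p then (if (2 * k + 1) / 2 ∈ T then 1 else 0)
              else E (2 * k + 1 - 2 * p))) = if k ∈ T then 2 else 0 := by
        intro k hk
        have hk := Finset.mem_range.1 hk
        have h1 : (2 * k + 1) / 2 = k := by omega
        have h2 : (2 * k) / 2 = k := by omega
        have h3 : 2 * k < 2 * p := by omega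
        have h4 : 2 * k + 1 < 2 * p := by omega
        simp only [h1, h2, h3, h4, if_true]
        by_cases h : k ∈ T <;> simp [h, bitWt]
      rw [Finset.sum_congr rfl this, Finset.sum_ite_mem, Finset.inter_eq_right.2 hT]
      simp [hc, mul_comm]
    · simp

/-- A vector with complementary entries on each of the first `p` pairs of coordinates has weight
`p` plus its weight on the remaining coordinates. -/
lemma sum_of_pairs (p r : ℕ) (v : ℕ → ZMod 2) (hv : ∀ k < p, v (2 * k) + v (2 * k + 1) = 1) :
    ∑ i ∈ Finset.range (2 * p + r), bitWt (v i)
      = p + ∑ i ∈ Finset.range r, bitWt (v (2 * p + i)) := by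
  rw [Finset.sum_range_add, sum_range_pairs]
  congr 1
  rw [Finset.sum_congr rfl (g := fun _ => 1)]
  · simp
  · intro k hk
    exact bitWt_add_flip _ _ (hv k (Finset.mem_range.1 hk))

/-- The offset vector: alternating `0, 1, 0, 1, …` with a prescribed value at position `s`. -/
def altVec (s : ℕ) (a : ZMod 2) (i : ℕ) : ZMod 2 := if i = s then a else (i : ZMod 2)

lemma altVec_flip (s k : ℕ) (a z : ZMod 2) (h : 2 * k + 1 < s) :
    (z + altVec s a (2 * k)) + (z + altVec s a (2 * k + 1)) = 1 := by
  have h1 : 2 * k ≠ s := by omega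
  have h2 : 2 * k + 1 ≠ s := by omega
  have h3 : (2 : ZMod 2) = 0 := by decide
  simp only [altVec, h1, h2, if_false]
  push_cast
  linear_combination (z + 2 * k) * h3

lemma Mfun_le_of {n : ℕ} (u : Fin n → ℕ → ZMod 2) (c : ℕ → ZMod 2) (b : ℕ)
    (h : ∀ x : Fin n → ZMod 2,
      ∑ i ∈ Finset.range n, bitWt ((∑ j, u j i * x j) + c i) ≤ b) :
    Mfun (Matrix.of fun i j : Fin n => u j i) (fun i => c i) ≤ b := by
  refine Finset.sup_le fun x _ => ?_
  refine le_trans (le_of_eq ?_) (h x)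
  exact hammingNorm_eq_sum_range (fun i => (∑ j, u j i * x j) + c i)

lemma of_mem_AstarSet {n m : ℕ} (u : Fin n → ℕ → ZMod 2) (hd : ∀ j, u j j = 1)
    (hw : ∀ j, ∑ i ∈ Finset.range n, bitWt (u j i) = m) :
    (Matrix.of fun i j : Fin n => u j i) ∈ AstarSet n m :=
  ⟨fun i => hd i, fun j => (hammingNorm_eq_sum_range (u j)).trans (hw j)⟩

/-- Leaving `r` rows unpaired costs at most `r`. -/
lemma Mfun_le_of_paired (p r : ℕ) (u : Fin (2 * p + r) → ℕ → ZMod 2)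
    (hu : ∀ j, ∀ k < p, u j (2 * k) = u j (2 * k + 1)) :
    Mfun (Matrix.of fun i j : Fin (2 * p + r) => u j i)
      (fun i => altVec (2 * p) 0 i) ≤ p + r := by
  refine Mfun_le_of u _ _ fun x => ?_
  rw [sum_of_pairs p r]
  · have := Finset.sum_le_card_nsmul (Finset.range r)
      (fun i => bitWt ((∑ j, u j (2 * p + i) * x j) + altVec (2 * p) 0 (2 * p + i))) 1
      (fun i _ => bitWt_le _)
    simp only [Finset.card_range, smul_eq_mul, mul_one] at this
    omega
  · intro k hk
    rw [Finset.sum_congr rfl fun j _ => by rw [hu j k hk]]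
    exact altVec_flip _ _ _ _ (by omega)

/-- Matrices with `r` unpaired rows, where each column is 1 in exactly `s` of these. A column
indexed by an unpaired row is 1 on the diagonal, so `r ≥ 1` forces `s = 1`. -/
lemma exists_paired (p r s t : ℕ) (hs : s ≤ 1) (hsr : s ≤ r) (hrs : r ≠ 0 → s = 1)
    (ht : t ≤ p) (ht1 : 1 ≤ t) :
    ∃ W ∈ AstarSet (2 * p + r) (2 * t + s), ∃ c, Mfun W c ≤ p + r := by
  have key : ∀ j : Fin (2 * p + r), ∃ u : ℕ → ZMod 2, (∀ k < p, u (2 * k) = u (2 * k + 1)) ∧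
      u j = 1 ∧ ∑ i ∈ Finset.range (2 * p + r), bitWt (u i) = 2 * t + s := by
    intro j
    have hj := j.isLt
    -- The pattern on the unpaired rows: one entry 1, at position `a`.
    have hE : ∀ a < r, ∑ i ∈ Finset.range r, bitWt (if i = a then 1 else 0) = s := by
      intro a ha
      rw [hrs (by omega), Finset.sum_eq_single a]
      · simp [bitWt]
      · intro b _ hb; simp [hb, bitWt]
      · intro h; exact absurd (Finset.mem_range.2 ha) h
    by_cases h : (j : ℕ) < 2 * p
    · obtain ⟨u, h1, -, h3, h4⟩ := exists_col p r t ht (fun i => if i = 0 then 1 else 0)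
        {(j : ℕ) / 2} (by simp; omega) (by simpa using ht1)
      refine ⟨u, h1, h3 _ (by simp), h4.trans ?_⟩
      rcases Nat.eq_zero_or_pos r with hr | hr
      · subst hr; simp; omega
      · rw [hE 0 hr]
    · obtain ⟨u, h1, h2, -, h4⟩ := exists_col p r t ht
        (fun i => if i = (j : ℕ) - 2 * p then 1 else 0) ∅ (by simp) (by simp)
      refine ⟨u, h1, ?_, h4.trans ?_⟩
      · have := h2 ((j : ℕ) - 2 * p)
        rw [Nat.add_sub_cancel' (by omega)] at this
        simpa using this
      · rw [hE _ (by omega)]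
  choose u h1 h2 h3 using key
  exact ⟨_, of_mem_AstarSet u h2 h3, _, Mfun_le_of_paired p r u h1⟩

/-- The case `n` odd, `m` even, with three rows left over. -/
lemma exists_triple (p t : ℕ) (ht : t ≤ p) :
    ∃ W ∈ AstarSet (2 * p + 3) (2 * t + 2), ∃ c, Mfun W c ≤ p + 2 := by
  have key : ∀ j : Fin (2 * p + 3), ∃ u : ℕ → ZMod 2, (∀ k < p, u (2 * k) = u (2 * k + 1)) ∧
      u j = 1 ∧ ∑ i ∈ Finset.range (2 * p + 3), bitWt (u i) = 2 * t + 2 ∧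
      u (2 * p) + u (2 * p + 1) + u (2 * p + 2) = 0 := by
    intro j
    have hj := j.isLt
    by_cases h : (j : ℕ) < 2 * (p + 1)
    · obtain ⟨u, h1, h2, h3, h4⟩ := exists_col (p + 1) 1 (t + 1) (by omega) (fun _ => 0)
        {(j : ℕ) / 2} (by simp; omega) (by simp)
      refine ⟨u, fun k hk => h1 k (by omega), h3 _ (by simp), h4.trans ?_, ?_⟩
      · simp [bitWt]; ring
      · have e := h2 0
        rw [show 2 * (p + 1) + 0 = 2 * p + 2 by ring] at e
        rw [e, h1 p (by omega)]
        generalize u (2 * p + 1) = a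
        revert a; decide
    · obtain ⟨u, h1, h2, -, h4⟩ := exists_col p 3 t ht
        (fun i => if i = 1 then 0 else 1) ∅ (by simp) (by simp)
      have e : (j : ℕ) = 2 * p + 2 := by omega
      refine ⟨u, h1, ?_, h4.trans ?_, ?_⟩
      · rw [e, h2]; rfl
      · simp [Finset.sum_range_succ, bitWt]
      · have e0 := h2 0
        rw [add_zero] at e0
        rw [e0, h2 1, h2 2]; decide
  choose u h1 h2 h3 h4 using key
  refine ⟨_, of_mem_AstarSet u h2 h3, fun i => altVec (2 * p + 2) 1 i, Mfun_le_of u _ _ fun x => ?_⟩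
  rw [sum_of_pairs p 3]
  · -- The three leftover rows of `W` sum to zero and those of `c` are `(0,1,1)`, so the three
    -- entries of `W x + c` sum to zero and at most two of them are 1.
    have hz : (∑ j, u j (2 * p) * x j) + (∑ j, u j (2 * p + 1) * x j)
        + (∑ j, u j (2 * p + 2) * x j) = 0 := by
      rw [← Finset.sum_add_distrib, ← Finset.sum_add_distrib]
      refine Finset.sum_eq_zero fun j _ => ?_
      rw [← add_mul, ← add_mul, h4, zero_mul]
    have h20 : (2 : ZMod 2) = 0 := by decide
    have c0 : altVec (2 * p + 2) 1 (2 * p) = 0 := by simp [altVec, h20]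
    have c1 : altVec (2 * p + 2) 1 (2 * p + 1) = 1 := by simp [altVec, h20]
    have c2 : altVec (2 * p + 2) 1 (2 * p + 2) = 1 := by simp [altVec]
    have fin3 : ∀ a b d : ZMod 2, a + b + d = 0 →
        bitWt (a + 0) + bitWt (b + 1) + bitWt (d + 1) ≤ 2 := by decide
    simp only [Finset.sum_range_succ, Finset.sum_range_zero, add_zero, zero_add, c0, c1, c2]
    have := fin3 _ _ _ hz
    simp only [add_zero] at this
    omega
  · intro k hk
    rw [Finset.sum_congr rfl fun j _ => by rw [h1 j k hk]]
    exact altVec_flip _ _ _ _ (by omega)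

lemma exists_star (n m : ℕ) (hm : 2 ≤ m) (hmn : m ≤ n) :
    ∃ W ∈ AstarSet n m, ∃ c, Mfun W c ≤ (n + 1) / 2 + if Even n ∧ Odd m then 1 else 0 := by
  rcases Nat.even_or_odd' n with ⟨a, rfl | rfl⟩ <;> rcases Nat.even_or_odd' m with ⟨b, rfl | rfl⟩
  · obtain ⟨W, hW, c, h⟩ := exists_paired a 0 0 b (by omega) (by omega) (by omega) (by omega)
      (by omega)
    exact ⟨W, hW, c, h.trans (by omega)⟩
  · obtain ⟨p, rfl⟩ : ∃ p, a = p + 1 := ⟨a - 1, by omega⟩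
    obtain ⟨W, hW, c, h⟩ := exists_paired p 2 1 b (by omega) (by omega) (by omega) (by omega)
      (by omega)
    refine ⟨W, hW, c, h.trans ?_⟩
    rw [if_pos ⟨even_two_mul _, odd_two_mul_add_one _⟩]
    omega
  · obtain ⟨p, rfl⟩ : ∃ p, a = p + 1 := ⟨a - 1, by omega⟩
    obtain ⟨t, rfl⟩ : ∃ t, b = t + 1 := ⟨b - 1, by omega⟩
    obtain ⟨W, hW, c, h⟩ := exists_triple p t (by omega)
    exact ⟨W, hW, c, h.trans (by omega)⟩
  · obtain ⟨W, hW, c, h⟩ := exists_paired a 1 1 b (by omega) (by omega) (by omega) (by omega)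
      (by omega)
    exact ⟨W, hW, c, h.trans (by omega)⟩

/-- Matrices with all columns of weight 2 attain `⌈n/2⌉`; for `n = 1` the identity does. -/
lemma exists_le (n m : ℕ) (hn : 1 ≤ n) (hm : min n 2 ≤ m) :
    ∃ W ∈ Aset n m, ∃ c, Mfun W c ≤ (n + 1) / 2 := by
  rcases Nat.lt_or_ge n 2 with h | h
  · obtain rfl : n = 1 := by omega
    refine ⟨1, ⟨fun i => Matrix.one_apply_eq i, fun j => ?_⟩, 0, Finset.sup_le fun x _ => ?_⟩
    · exact (hammingNorm_le_card_fintype).trans (by simpa using hm)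
    · exact (hammingNorm_le_card_fintype).trans (by simp)
  · obtain ⟨W, hW, c, hc⟩ := exists_star n 2 le_rfl h
    refine ⟨W, ⟨hW.1, fun j => (hW.2 j).le.trans (by omega)⟩, c, ?_⟩
    simpa [show ¬ Odd 2 by decide] using hc

/-! ### The values of `ν` and `ν*` -/

lemma sInf_eq_of {n b : ℕ} (S : Set (Matrix (Fin n) (Fin n) (ZMod 2)))
    (h1 : ∃ W ∈ S, ∃ c, Mfun W c ≤ b) (h2 : ∀ W ∈ S, ∀ c, b ≤ Mfun W c) :
    sInf {t | ∃ W ∈ S, ∃ c, Mfun W c = t} = b := by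
  obtain ⟨W, hW, c, h⟩ := h1
  refine IsLeast.csInf_eq ⟨⟨W, hW, c, le_antisymm h (h2 W hW c)⟩, ?_⟩
  rintro t ⟨W, hW, c, rfl⟩
  exact h2 W hW c

lemma nu_eq (n m : ℕ) (hn : 1 ≤ n) (hm : min n 2 ≤ m) : nu n m = (n + 1) / 2 :=
  sInf_eq_of _ (exists_le n m hn hm) fun W hW c => by
    have := le_two_mul_Mfun W hW.1 c
    omega

/-- Theorem C: (a) `ν(n) = ν(n,m) = ⌈n/2⌉` for `m > 1`; (b) for `n ≥ m`,
`ν*(n,m) = ν(n,m) + 1` if `n` is even and `m` odd, and `ν*(n,m) = ν(n,m)` otherwise.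
(Note `⌈n/2⌉ = (n+1)/2` in natural division.) -/
theorem nu_formula (n m : ℕ) (hn : 1 ≤ n) (hm : 2 ≤ m) :
    (nu n n = nu n m ∧ nu n m = (n + 1) / 2) ∧
    (m ≤ n →
      nuStar n m = if Even n ∧ Odd m then nu n m + 1 else nu n m) := by
  have hnu := nu_eq n m hn (by omega)
  refine ⟨⟨(nu_eq n n hn (by omega)).trans hnu.symm, hnu⟩, fun hmn => ?_⟩
  have hstar : nuStar n m = (n + 1) / 2 + if Even n ∧ Odd m then 1 else 0 := by
    refine sInf_eq_of _ (exists_star n m hm hmn) fun W hW c => ?_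
    have hle := le_two_mul_Mfun W hW.1 c
    split_ifs with hp
    · by_contra hlt
      obtain ⟨⟨a, ha⟩, hodd⟩ := hp
      have hev := even_col_of_tight W hW.1 c (by omega) ⟨0, hn⟩
      rw [hW.2] at hev
      exact (Nat.not_even_iff_odd.2 hodd) hev
    · omega
  rw [hstar, hnu]
  split_ifs <;> rfl
end
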